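/- arXiv:1101.3835 — 8 statements merged into one kernel-verified Lean document; each statement's English description precedes it below -/
import Mathlib

section
/- For every integer ℓ with 1 ≤ ℓ ≤ K−1 and every (w,b) ∈ (0,T) × [0,R̄], one has −η φ_ℓ(w,b) ≤ T − w − η b; equivalently φ_ℓ(w,b) ≥ b − (T−w)/η. -/
/-!
Since `max b (…) ≥ b` and `u ≤ T - w`, the integrand defining `φ_ℓ(w,b)` is at least
`(b - (T - w)/η) · g · f_R`, and `g` and `f_R` are probability densities on the domains of
integration (`integral_gmin`), so integrating gives `φ_ℓ(w,b) ≥ b - (T - w)/η`.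

As the Bochner integral of a non-integrable function is `0` by convention, this monotonicity step requires
integrability of both the inner and the outer integrand. That follows from joint measurability of
`φ_ℓ` (`measurable_phi`) and its boundedness on `(0,T] × [0,R̄]` (`phi_bounded`), each proved by
induction on `ℓ`.
-/

open MeasureTheory Set

/-- Density of the minimum of `m` iid Uniform[0,s] random variables. -/
noncomputable def gmin (m : ℕ) (s u : ℝ) : ℝ :=
  if 0 ≤ u ∧ u ≤ s then (m : ℝ) * (s - u) ^ (m - 1) / s ^ m else 0

/-- Threshold functions `φ_ℓ` defined recursively. -/
noncomputable def phi (T Rbar η : ℝ) (fR : ℝ → ℝ) : ℕ → ℝ → ℝ → ℝ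
  | 0 => fun _ _ => 0
  | ℓ + 1 => fun w b =>
      ∫ r in (0:ℝ)..Rbar, ∫ u in (0:ℝ)..(T - w),
        (max b (max r (phi T Rbar η fR ℓ (w + u) (max b r))) - u / η)
          * gmin (ℓ + 1) (T - w) u * fR r

lemma gmin_nonneg (m : ℕ) (s u : ℝ) : 0 ≤ gmin m s u := by
  unfold gmin
  split_ifs with h
  · have h1 : 0 ≤ s - u := by linarith [h.2]
    have h2 : 0 ≤ s := h.1.trans h.2
    positivity
  · exact le_rfl

lemma measurable_gmin (m : ℕ) : Measurable (fun p : ℝ × ℝ => gmin m p.1 p.2) := by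
  unfold gmin
  refine Measurable.ite ?_ (by fun_prop) measurable_const
  exact (measurableSet_le measurable_const measurable_snd).inter
    (measurableSet_le measurable_snd measurable_fst)

lemma gmin_eqOn (ℓ : ℕ) {s : ℝ} (hs : 0 < s) :
    EqOn (fun u => ((ℓ : ℝ) + 1) * (s - u) ^ ℓ / s ^ (ℓ + 1)) (gmin (ℓ + 1) s) (uIcc 0 s) := by
  intro u hu
  rw [uIcc_of_le hs.le] at hu
  have h : 0 ≤ u ∧ u ≤ s := hu
  simp [gmin, h]

lemma intervalIntegrable_gmin (ℓ : ℕ) {s : ℝ} (hs : 0 < s) :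
    IntervalIntegrable (gmin (ℓ + 1) s) volume 0 s := by
  refine IntervalIntegrable.congr (fun u hu => gmin_eqOn ℓ hs (uIoc_subset_uIcc hu)) ?_
  apply Continuous.intervalIntegrable
  fun_prop

lemma integral_gmin (ℓ : ℕ) {s : ℝ} (hs : 0 < s) :
    ∫ u in (0:ℝ)..s, gmin (ℓ + 1) s u = 1 := by
  rw [← intervalIntegral.integral_congr (gmin_eqOn ℓ hs)]
  simp only [mul_div_assoc]
  rw [intervalIntegral.integral_const_mul, intervalIntegral.integral_div,
    intervalIntegral.integral_comp_sub_left (fun x => x ^ ℓ) s, integral_pow]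
  have h : (ℓ : ℝ) + 1 ≠ 0 := by positivity
  simp
  field_simp

/-- The integrand in the recursion that defines `phi` at index `ℓ + 1`. -/
noncomputable def phiIntegrand (T Rbar η : ℝ) (fR : ℝ → ℝ) (ℓ : ℕ) (w b r u : ℝ) : ℝ :=
  (max b (max r (phi T Rbar η fR ℓ (w + u) (max b r))) - u / η)
    * gmin (ℓ + 1) (T - w) u * fR r

lemma phi_succ (T Rbar η : ℝ) (fR : ℝ → ℝ) (ℓ : ℕ) (w b : ℝ) :
    phi T Rbar η fR (ℓ + 1) w b =
      ∫ r in (0:ℝ)..Rbar, ∫ u in (0:ℝ)..(T - w), phiIntegrand T Rbar η fR ℓ w b r u := rfl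

lemma measurable_phiIntegrand (T Rbar η : ℝ) (fR : ℝ → ℝ) (hfR : Measurable fR) (ℓ : ℕ)
    (h : Measurable (fun p : ℝ × ℝ => phi T Rbar η fR ℓ p.1 p.2)) :
    Measurable (fun q : ((ℝ × ℝ) × ℝ) × ℝ =>
      phiIntegrand T Rbar η fR ℓ q.1.1.1 q.1.1.2 q.1.2 q.2) := by
  unfold phiIntegrand
  have h1 : Measurable (fun q : ((ℝ × ℝ) × ℝ) × ℝ =>
      phi T Rbar η fR ℓ (q.1.1.1 + q.2) (max q.1.1.2 q.1.2)) :=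
    h.comp (f := fun q : ((ℝ × ℝ) × ℝ) × ℝ => (q.1.1.1 + q.2, max q.1.1.2 q.1.2)) (by fun_prop)
  have h2 : Measurable (fun q : ((ℝ × ℝ) × ℝ) × ℝ => gmin (ℓ + 1) (T - q.1.1.1) q.2) :=
    (measurable_gmin (ℓ + 1)).comp
      (f := fun q : ((ℝ × ℝ) × ℝ) × ℝ => (T - q.1.1.1, q.2)) (by fun_prop)
  fun_prop

/-- Joint measurability of an interval integral with a variable upper endpoint. -/
lemma measurable_intervalIntegral {α : Type*} [MeasurableSpace α] {F : α → ℝ → ℝ} {e : α → ℝ}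
    (hF : Measurable (fun q : α × ℝ => F q.1 q.2)) (he : Measurable e) :
    Measurable (fun a => ∫ u in (0:ℝ)..(e a), F a u) := by
  have key : ∀ S : Set (α × ℝ), MeasurableSet S →
      Measurable (fun a => ∫ u, S.indicator (fun q : α × ℝ => F q.1 q.2) (a, u)) := fun S hS =>
    ((hF.indicator hS).stronglyMeasurable.integral_prod_right').measurable
  have h1 := key {q | 0 < q.2 ∧ q.2 ≤ e q.1}
    ((measurableSet_lt measurable_const measurable_snd).inter
      (measurableSet_le measurable_snd (he.comp measurable_fst)))
  have h2 := key {q | e q.1 < q.2 ∧ q.2 ≤ 0}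
    ((measurableSet_lt (he.comp measurable_fst) measurable_snd).inter
      (measurableSet_le measurable_snd measurable_const))
  convert h1.sub h2 using 1
  ext a
  simp only [intervalIntegral, Pi.sub_apply]
  rw [← integral_indicator measurableSet_Ioc, ← integral_indicator measurableSet_Ioc]
  rfl

lemma measurable_phi (T Rbar η : ℝ) (fR : ℝ → ℝ) (hfR : Measurable fR) (ℓ : ℕ) :
    Measurable (fun p : ℝ × ℝ => phi T Rbar η fR ℓ p.1 p.2) := by
  induction ℓ with
  | zero => exact measurable_const
  | succ ℓ ih =>
    simp only [phi_succ]
    refine measurable_intervalIntegral (e := fun _ => Rbar) ?_ measurable_const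
    exact measurable_intervalIntegral (α := (ℝ × ℝ) × ℝ) (e := fun q => T - q.1.1)
      (F := fun q u => phiIntegrand T Rbar η fR ℓ q.1.1 q.1.2 q.2 u)
      (measurable_phiIntegrand T Rbar η fR hfR ℓ ih) (by fun_prop)

lemma norm_phiIntegrand_le {T Rbar η : ℝ} (hη : 0 < η) {fR : ℝ → ℝ}
    (hfR_nonneg : ∀ r, 0 ≤ fR r) {ℓ : ℕ} {C : ℝ}
    (hC : ∀ w ∈ Ioc 0 T, ∀ b ∈ Icc 0 Rbar, |phi T Rbar η fR ℓ w b| ≤ C)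
    {w b r u : ℝ} (hw : w ∈ Ioo 0 T) (hb : b ∈ Icc 0 Rbar) (hr : r ∈ Ioc 0 Rbar)
    (hu : u ∈ Ioc 0 (T - w)) :
    ‖phiIntegrand T Rbar η fR ℓ w b r u‖ ≤
      (Rbar + C + T / η) * gmin (ℓ + 1) (T - w) u * fR r := by
  have hphi := abs_le.1 (hC (w + u) ⟨by linarith [hw.1, hu.1], by linarith [hu.2]⟩ (max b r)
    ⟨le_max_of_le_left hb.1, max_le hb.2 hr.2⟩)
  have hg := gmin_nonneg (ℓ + 1) (T - w) u
  have hu1 : u / η ≤ T / η := by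
    gcongr
    linarith [hu.2, hw.1]
  have hu0 : 0 ≤ u / η := div_nonneg hu.1.le hη.le
  have hm0 : 0 ≤ max b (max r (phi T Rbar η fR ℓ (w + u) (max b r))) := le_max_of_le_left hb.1
  have hm1 : max b (max r (phi T Rbar η fR ℓ (w + u) (max b r))) ≤ Rbar + C := by
    refine max_le ?_ (max_le ?_ ?_) <;> linarith [hb.1, hb.2, hr.2]
  unfold phiIntegrand
  rw [Real.norm_eq_abs, abs_mul, abs_mul, abs_of_nonneg hg, abs_of_nonneg (hfR_nonneg r)]
  refine mul_le_mul_of_nonneg_right (mul_le_mul_of_nonneg_right ?_ hg) (hfR_nonneg r)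
  rw [abs_le]
  constructor <;> linarith [hb.1, hb.2]

lemma integral_const_mul_gmin (ℓ : ℕ) {s : ℝ} (hs : 0 < s) (D c : ℝ) :
    ∫ u in (0:ℝ)..s, D * gmin (ℓ + 1) s u * c = D * c := by
  rw [intervalIntegral.integral_mul_const, intervalIntegral.integral_const_mul,
    integral_gmin ℓ hs, mul_one]

lemma norm_inner_le {T Rbar η : ℝ} (hη : 0 < η) {fR : ℝ → ℝ}
    (hfR_nonneg : ∀ r, 0 ≤ fR r) {ℓ : ℕ} {C : ℝ}
    (hC : ∀ w ∈ Ioc 0 T, ∀ b ∈ Icc 0 Rbar, |phi T Rbar η fR ℓ w b| ≤ C)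
    {w b r : ℝ} (hw : w ∈ Ioo 0 T) (hb : b ∈ Icc 0 Rbar) (hr : r ∈ Ioc 0 Rbar) :
    ‖∫ u in (0:ℝ)..(T - w), phiIntegrand T Rbar η fR ℓ w b r u‖ ≤
      (Rbar + C + T / η) * fR r := by
  have hs : 0 < T - w := sub_pos.2 hw.2
  rw [← integral_const_mul_gmin ℓ hs]
  refine intervalIntegral.norm_integral_le_of_norm_le hs.le ?_
    (((intervalIntegrable_gmin ℓ hs).const_mul _).mul_const _)
  exact ae_of_all _ fun u hu => norm_phiIntegrand_le hη hfR_nonneg hC hw hb hr hu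

/-- Boundedness of `phi` on `(0,T] × [0,R̄]`. The endpoint `w = T` is included because the
recursion evaluates `phi` at `w + u` with `u ≤ T - w`; there the inner integral is over a null
interval. -/
lemma phi_bounded {T Rbar η : ℝ} (hRbar : 0 < Rbar) (hη : 0 < η) {fR : ℝ → ℝ}
    (hfR_nonneg : ∀ r, 0 ≤ fR r) (hfR : IntervalIntegrable fR volume 0 Rbar) (ℓ : ℕ) :
    ∃ C : ℝ, ∀ w ∈ Ioc 0 T, ∀ b ∈ Icc 0 Rbar, |phi T Rbar η fR ℓ w b| ≤ C := by
  induction ℓ with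
  | zero => exact ⟨0, fun w _ b _ => by simp [phi]⟩
  | succ ℓ ih =>
    obtain ⟨C, hC⟩ := ih
    refine ⟨max 0 (∫ r in (0:ℝ)..Rbar, (Rbar + C + T / η) * fR r), fun w hw b hb => ?_⟩
    rw [phi_succ]
    rcases hw.2.eq_or_lt with rfl | hlt
    · simp
    · refine le_max_of_le_right ?_
      rw [← Real.norm_eq_abs]
      refine intervalIntegral.norm_integral_le_of_norm_le hRbar.le ?_ (hfR.const_mul _)
      exact ae_of_all _ fun r hr => norm_inner_le hη hfR_nonneg hC ⟨hw.1, hlt⟩ hb hr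

lemma le_phi_succ {T Rbar η : ℝ} (hRbar : 0 < Rbar) (hη : 0 < η) {fR : ℝ → ℝ}
    (hfR_nonneg : ∀ r, 0 ≤ fR r) (hmeas : Measurable fR)
    (hfR_int : ∫ r in (0:ℝ)..Rbar, fR r = 1) (ℓ : ℕ)
    {w b : ℝ} (hw : w ∈ Ioo 0 T) (hb : b ∈ Icc 0 Rbar) :
    b - (T - w) / η ≤ phi T Rbar η fR (ℓ + 1) w b := by
  have hfR : IntervalIntegrable fR volume 0 Rbar := by
    by_contra h
    rw [intervalIntegral.integral_undef h] at hfR_int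
    exact zero_ne_one hfR_int
  have hs : 0 < T - w := sub_pos.2 hw.2
  obtain ⟨C, hC⟩ := phi_bounded (T := T) hRbar hη hfR_nonneg hfR ℓ
  have hF := measurable_phiIntegrand T Rbar η fR hmeas ℓ (measurable_phi T Rbar η fR hmeas ℓ)
  have hF1 : ∀ r, Measurable (phiIntegrand T Rbar η fR ℓ w b r) := fun r =>
    hF.comp (f := fun u : ℝ => (((w, b), r), u)) (by fun_prop)
  have hF2 : Measurable (fun r => ∫ u in (0:ℝ)..(T - w), phiIntegrand T Rbar η fR ℓ w b r u) := by
    refine measurable_intervalIntegral (e := fun _ => T - w) ?_ measurable_const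
    exact hF.comp (f := fun q : ℝ × ℝ => (((w, b), q.1), q.2)) (by fun_prop)
  have hin : ∀ r ∈ Ioc 0 Rbar, IntervalIntegrable (phiIntegrand T Rbar η fR ℓ w b r)
      volume 0 (T - w) := by
    intro r hr
    refine (((intervalIntegrable_gmin ℓ hs).const_mul (Rbar + C + T / η)).mul_const
      (fR r)).mono_fun' (hF1 r).aestronglyMeasurable ?_
    rw [uIoc_of_le hs.le]
    exact (ae_restrict_iff' measurableSet_Ioc).2
      (ae_of_all _ fun u hu => norm_phiIntegrand_le hη hfR_nonneg hC hw hb hr hu)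
  have hout : IntervalIntegrable
      (fun r => ∫ u in (0:ℝ)..(T - w), phiIntegrand T Rbar η fR ℓ w b r u) volume 0 Rbar := by
    refine (hfR.const_mul (Rbar + C + T / η)).mono_fun' hF2.aestronglyMeasurable ?_
    rw [uIoc_of_le hRbar.le]
    exact (ae_restrict_iff' measurableSet_Ioc).2
      (ae_of_all _ fun r hr => norm_inner_le hη hfR_nonneg hC hw hb hr)
  have hle : ∀ r ∈ Ioo 0 Rbar, (b - (T - w) / η) * fR r ≤
      ∫ u in (0:ℝ)..(T - w), phiIntegrand T Rbar η fR ℓ w b r u := by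
    intro r hr
    rw [← integral_const_mul_gmin ℓ hs]
    refine intervalIntegral.integral_mono_on hs.le
      (((intervalIntegrable_gmin ℓ hs).const_mul _).mul_const _) (hin r ⟨hr.1, hr.2.le⟩) ?_
    intro u hu
    refine mul_le_mul_of_nonneg_right (mul_le_mul_of_nonneg_right ?_ (gmin_nonneg _ _ _))
      (hfR_nonneg r)
    exact sub_le_sub (le_max_left _ _) (div_le_div_of_nonneg_right hu.2 hη.le)
  calc b - (T - w) / η = ∫ r in (0:ℝ)..Rbar, (b - (T - w) / η) * fR r := by
        rw [intervalIntegral.integral_const_mul, hfR_int, mul_one]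
    _ ≤ phi T Rbar η fR (ℓ + 1) w b := by
        rw [phi_succ]
        exact intervalIntegral.integral_mono_on_of_le_Ioo hRbar.le (hfR.const_mul _) hout hle

/-- For `1 ≤ ℓ ≤ K − 1` and `(w,b) ∈ (0,T) × [0,R̄]`, one has
`−η φ_ℓ(w,b) ≤ T − w − η b`. -/
theorem phi_lower_bound (T Rbar η : ℝ) (hT : 0 < T) (hRbar : 0 < Rbar) (hη : 0 < η)
    (fR : ℝ → ℝ) (hfR_nonneg : ∀ r, 0 ≤ fR r)
    (hfR_supp : ∀ r, r < 0 ∨ Rbar < r → fR r = 0)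
    (hfR_meas : Measurable fR)
    (hfR_int : ∫ r in (0:ℝ)..Rbar, fR r = 1)
    (K : ℕ) (hK : 2 ≤ K)
    (ℓ : ℕ) (hℓ1 : 1 ≤ ℓ) (hℓ2 : ℓ ≤ K - 1)
    (w b : ℝ) (hw : w ∈ Set.Ioo 0 T) (hb : b ∈ Set.Icc 0 Rbar) :
    -η * phi T Rbar η fR ℓ w b ≤ T - w - η * b := by
  obtain ⟨n, rfl⟩ : ∃ n, ℓ = n + 1 := ⟨ℓ - 1, by omega⟩
  have h := le_phi_succ hRbar hη hfR_nonneg hfR_meas hfR_int n hw hb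
  have h2 := mul_le_mul_of_nonneg_left h hη.le
  have h3 : η * (b - (T - w) / η) = η * b - (T - w) := by field_simp
  linarith
end

section
/- Fix n ∈ {1,…,K} and (w,b) ∈ (0,T)×[0,R̄]. For every k with 1 ≤ k ≤ n, if p ∈ P_k is the point mass at n (i.e., p(n) = 1 and p(m) = 0 for m ≠ n), then J_k(p,w,b) = min{ −η b, −η φ_{n−k}(w,b) }. -/
/-!
Induction on the number `n - k` of offers still to come. If the belief is the point mass at `n = k`,
continuing costs `T - w - η b ≥ -η b`, and `φ_0 = 0 ≤ b`, so both sides equal `-η b`. If `k < n`, the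
sum defining the continuing cost collapses to its `n`-th term, and for `0 < u < T - w` the updated
belief is again the point mass at `n` because `g_{n-k}(u; T-w) > 0` there (`pointMass_τbel`). The
induction hypothesis turns the integrand into `-η` times the integrand of `φ_{n-k}`, off the
null set `{u = T - w}`; pulling the constant `-η` out of the integrals requires no integrability.
-/

open MeasureTheory Set

/-- Membership in the probability simplex `P_k` (probability vectors on `{k,…,K}`). -/
def memP (K k : ℕ) (p : ℕ → ℝ) : Prop :=
  (∀ n, 0 ≤ p n) ∧ (∀ n, n < k ∨ K < n → p n = 0) ∧ ∑ n ∈ Finset.Icc k K, p n = 1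

/-- Belief state transition `τ_{k+1}(p,w,u)`. -/
noncomputable def τbel (T : ℝ) (K k : ℕ) (p : ℕ → ℝ) (w u : ℝ) : ℕ → ℝ :=
  fun n => p n * gmin (n - k) (T - w) u /
    ∑ ℓ ∈ Finset.Icc (k + 1) K, p ℓ * gmin (ℓ - k) (T - w) u

/-- Continuing cost at stage `k`, given the value function `Jnext` of stage `k+1`. -/
noncomputable def contCost (T Rbar η : ℝ) (fR : ℝ → ℝ) (K : ℕ)
    (Jnext : (ℕ → ℝ) → ℝ → ℝ → ℝ) (k : ℕ) (p : ℕ → ℝ) (w b : ℝ) : ℝ :=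
  p k * (T - w - η * b) +
    ∑ n ∈ Finset.Icc (k + 1) K, p n *
      ∫ r in (0:ℝ)..Rbar, ∫ u in (0:ℝ)..(T - w),
        (u + Jnext (τbel T K k p w u) (w + u) (max b r)) * gmin (n - k) (T - w) u * fR r

/-- Backward value recursion: `Jaux m` is the value function at stage `K - m`. -/
noncomputable def Jaux (T Rbar η : ℝ) (fR : ℝ → ℝ) (K : ℕ) : ℕ → (ℕ → ℝ) → ℝ → ℝ → ℝ
  | 0 => fun _ _ b => -η * b
  | m + 1 => fun p w b =>
      min (-η * b)
        (contCost T Rbar η fR K (Jaux T Rbar η fR K m) (K - (m + 1)) p w b)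

/-- The optimal cost-to-go function `J_k`. -/
noncomputable def Jval (T Rbar η : ℝ) (fR : ℝ → ℝ) (K k : ℕ) : (ℕ → ℝ) → ℝ → ℝ → ℝ :=
  Jaux T Rbar η fR K (K - k)

/-- The continuing cost `c_k`. -/
noncomputable def cCost (T Rbar η : ℝ) (fR : ℝ → ℝ) (K k : ℕ) : (ℕ → ℝ) → ℝ → ℝ → ℝ :=
  contCost T Rbar η fR K (Jaux T Rbar η fR K (K - (k + 1))) k

lemma gmin_pos {m : ℕ} (hm : m ≠ 0) {s u : ℝ} (hu : 0 < u) (hus : u < s) : 0 < gmin m s u := by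
  unfold gmin
  rw [if_pos ⟨hu.le, hus.le⟩]
  have h1 : 0 < s - u := sub_pos.2 hus
  have h2 : 0 < s := hu.trans hus
  have h3 : (0 : ℝ) < m := by exact_mod_cast Nat.pos_of_ne_zero hm
  positivity

/-- A sum of terms weighted by the point mass at `n` collapses to the term of index `n`. -/
lemma sum_pointMass {p : ℕ → ℝ} {n : ℕ} (hpn : p n = 1) (hpm : ∀ m, m ≠ n → p m = 0)
    {s : Finset ℕ} (hn : n ∈ s) (F : ℕ → ℝ) : ∑ m ∈ s, p m * F m = F n := by
  rw [Finset.sum_eq_single_of_mem n hn (fun m _ hm => by rw [hpm m hm, zero_mul]), hpn, one_mul]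

/-- The belief transition fixes the point mass at `n`, as long as `k < n` and the interarrival
time lies strictly between `0` and `T - w`. -/
lemma pointMass_τbel {T w u : ℝ} {K k n : ℕ} {p : ℕ → ℝ} (hkn : k < n) (hnK : n ≤ K)
    (hpn : p n = 1) (hpm : ∀ m, m ≠ n → p m = 0) (hu : 0 < u) (hus : u < T - w) :
    τbel T K k p w u n = 1 ∧ ∀ m, m ≠ n → τbel T K k p w u m = 0 := by
  have hg : gmin (n - k) (T - w) u ≠ 0 := (gmin_pos (by omega) hu hus).ne'
  constructor
  · unfold τbel
    rw [sum_pointMass hpn hpm (Finset.mem_Icc.2 ⟨hkn, hnK⟩) fun l => gmin (l - k) (T - w) u,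
      hpn, one_mul, div_self hg]
  · intro m hm
    simp [τbel, hpm m hm]

lemma Jval_of_lt (T Rbar η : ℝ) (fR : ℝ → ℝ) {K k : ℕ} (hk : k < K) (p : ℕ → ℝ) (w b : ℝ) :
    Jval T Rbar η fR K k p w b = min (-η * b)
      (contCost T Rbar η fR K (Jval T Rbar η fR K (k + 1)) k p w b) := by
  obtain ⟨m, rfl⟩ : ∃ m, K = k + (m + 1) := ⟨K - k - 1, by omega⟩
  have h1 : k + (m + 1) - k = m + 1 := by omega
  have h2 : k + (m + 1) - (k + 1) = m := by omega
  have h3 : k + (m + 1) - (m + 1) = k := by omega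
  simp only [Jval, h1, h2, Jaux, h3]

/-- The one-point formula for the number `d` of remaining offers, quantified over all states so
that it can serve as an induction hypothesis. -/
lemma Jval_pointMass {T Rbar η : ℝ} (hRbar : 0 < Rbar) (hη : 0 < η) (fR : ℝ → ℝ) {K n : ℕ}
    (hnK : n ≤ K) (d : ℕ) : ∀ (k : ℕ), k + d = n → ∀ p : ℕ → ℝ, p n = 1 →
      (∀ m, m ≠ n → p m = 0) → ∀ w ∈ Ioo 0 T, ∀ b ∈ Icc 0 Rbar,
      Jval T Rbar η fR K k p w b = min (-η * b) (-η * phi T Rbar η fR d w b) := by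
  induction d with
  | zero =>
    intro k hk p hpn hpm w hw b hb
    obtain rfl : k = n := hk
    have hR : min (-η * b) (-η * phi T Rbar η fR 0 w b) = -η * b := by
      apply min_eq_left
      simp only [phi]
      nlinarith [mul_nonneg hη.le hb.1]
    rw [hR]
    rcases hnK.eq_or_lt with h | h
    · simp [Jval, Jaux, ← h]
    · rw [Jval_of_lt _ _ _ _ h]
      apply min_eq_left
      have hsum : ∀ F : ℕ → ℝ, ∑ m ∈ Finset.Icc (k + 1) K, p m * F m = 0 := fun F =>
        Finset.sum_eq_zero fun m hm => by
          rw [hpm m (by have := (Finset.mem_Icc.1 hm).1; omega), zero_mul]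
      unfold contCost
      rw [hsum, hpn]
      linarith [hw.2]
  | succ d ih =>
    intro k hk p hpn hpm w hw b hb
    have hkn : k < n := by omega
    have hnk : n - k = d + 1 := by omega
    rw [Jval_of_lt _ _ _ _ (hkn.trans_le hnK)]
    congr 1
    unfold contCost
    rw [hpm k hkn.ne, zero_mul, zero_add, sum_pointMass hpn hpm (Finset.mem_Icc.2 ⟨hkn, hnK⟩)
      fun m => ∫ r in (0:ℝ)..Rbar, ∫ u in (0:ℝ)..(T - w),
        (u + Jval T Rbar η fR K (k + 1) (τbel T K k p w u) (w + u) (max b r))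
          * gmin (m - k) (T - w) u * fR r]
    simp only [phi, hnk]
    rw [← intervalIntegral.integral_const_mul]
    refine intervalIntegral.integral_congr fun r hr => ?_
    rw [uIcc_of_le hRbar.le] at hr
    rw [← intervalIntegral.integral_const_mul]
    refine intervalIntegral.integral_congr_ae ?_
    -- At `u = T - w` the time `w + u` leaves `(0, T)`, so this endpoint is discarded.
    filter_upwards [Measure.ae_ne volume (T - w)] with u hne hu
    rw [uIoc_of_le (sub_pos.2 hw.2).le] at hu
    have hus : u < T - w := lt_of_le_of_ne hu.2 hne
    obtain ⟨h1, h2⟩ := pointMass_τbel hkn hnK hpn hpm hu.1 hus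
    rw [ih (k + 1) (by omega) _ h1 h2 (w + u) ⟨by linarith [hw.1, hu.1], by linarith⟩ (max b r)
      ⟨le_max_of_le_left hb.1, max_le hb.2 hr.2⟩]
    have hmax : ∀ x y : ℝ, min (-η * x) (-η * y) = -η * max x y := fun x y =>
      (Antitone.map_max (f := fun z : ℝ => -η * z) fun _ _ h =>
        mul_le_mul_of_nonpos_left h (neg_nonpos.2 hη.le)).symm
    rw [hmax, ← max_assoc b r]
    field_simp
    ring

/-- One-point Lemma: if the belief `p ∈ P_k` is a point mass at `n` (with `k ≤ n ≤ K`),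
then `J_k(p,w,b) = min{−ηb, −η φ_{n−k}(w,b)}`. -/
theorem one_point_lemma (T Rbar η : ℝ) (hT : 0 < T) (hRbar : 0 < Rbar) (hη : 0 < η)
    (fR : ℝ → ℝ) (hfR_nonneg : ∀ r, 0 ≤ fR r)
    (hfR_supp : ∀ r, r < 0 ∨ Rbar < r → fR r = 0)
    (hfR_meas : Measurable fR)
    (hfR_int : ∫ r in (0:ℝ)..Rbar, fR r = 1)
    (K : ℕ) (hK : 2 ≤ K)
    (n : ℕ) (hn1 : 1 ≤ n) (hn2 : n ≤ K)
    (w b : ℝ) (hw : w ∈ Set.Ioo 0 T) (hb : b ∈ Set.Icc 0 Rbar)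
    (k : ℕ) (hk1 : 1 ≤ k) (hk2 : k ≤ n)
    (p : ℕ → ℝ) (hp : memP K k p)
    (hpn : p n = 1) (hpm : ∀ m, m ≠ n → p m = 0) :
    Jval T Rbar η fR K k p w b =
      min (-η * b) (-η * phi T Rbar η fR (n - k) w b) := by
  exact Jval_pointMass hRbar hη fR hn2 (n - k) k (by omega) p hpn hpm w hw b hb
end

section
/- For every k with 1 ≤ k ≤ K−1 and every fixed (w,b) ∈ (0,T)×[0,R̄], the continuing cost p ↦ c_k(p,w,b) is concave on P_k: for all p, q ∈ P_k and all λ ∈ [0,1], c_k(λ p + (1−λ) q, w, b) ≥ λ c_k(p,w,b) + (1−λ) c_k(q,w,b). Consequently p ↦ J_k(p,w,b) is also concave on P_k. -/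
/-!
Multiplying the value function of stage `k+1`, evaluated at the updated belief, by the normalising
constant of that belief cancels the division in `τbel`: what remains under the integral of the
continuing cost is the *perspective* `S x * J (x / S x)`, with `S x = ∑ n, x n`, evaluated at the
vector `x n = p n * gmin (n - k) (T - w) u`, which is linear in `p`. So it suffices to show that the
perspective of every `Jaux m` is superadditive on the cone of nonnegative vectors supported on
`{K-m,…,K}` (`Jaux_perspective_superadd`). This goes by induction on `m`: superadditivity of the
perspective at stage `m` integrates to superadditivity of the continuing cost at the next stage
(`contCost_superadd`); the continuing cost is positively homogeneous (`contCost_smul`), so the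
perspective of `Jaux (m+1)` is the minimum of a linear function and of the continuing cost, hence
again superadditive. Superadditivity and homogeneity together give concavity.

All integrals involved converge: `Jaux m` is jointly Borel measurable (`measurable_Jaux`) and
bounded on beliefs with entries in `[0,1]` (`Jaux_bounded`).
-/

open MeasureTheory Set

/-! ### Measurability -/

lemma measurable_gmin_s3 (m : ℕ) : Measurable (fun y : ℝ × ℝ => gmin m y.1 y.2) := by
  unfold gmin
  refine Measurable.ite ?_ (by fun_prop) measurable_const
  exact (measurableSet_le measurable_const measurable_snd).inter
    (measurableSet_le measurable_snd measurable_fst)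

lemma Measurable.gmin_comp {α : Type*} [MeasurableSpace α] (m : ℕ) {f g : α → ℝ}
    (hf : Measurable f) (hg : Measurable g) : Measurable (fun x => gmin m (f x) (g x)) :=
  (measurable_gmin_s3 m).comp (hf.prodMk hg)

lemma measurable_param_integral {α : Type*} [MeasurableSpace α] {f : α → ℝ → ℝ}
    (hf : Measurable (Function.uncurry f)) {s : α → ℝ} (hs : Measurable s) :
    Measurable (fun x => ∫ u in (0:ℝ)..(s x), f x u) := by
  have key : ∀ a b : α → ℝ, Measurable a → Measurable b →
      Measurable (fun x => ∫ u in Ioc (a x) (b x), f x u) := by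
    intro a b ha hb
    have h1 : MeasurableSet {y : α × ℝ | a y.1 < y.2 ∧ y.2 ≤ b y.1} :=
      (measurableSet_lt (ha.comp measurable_fst) measurable_snd).inter
        (measurableSet_le measurable_snd (hb.comp measurable_fst))
    have h2 := ((hf.indicator h1).stronglyMeasurable.integral_prod_right' (ν := volume)).measurable
    convert h2 using 2 with x
    rw [← integral_indicator measurableSet_Ioc]
    rfl
  unfold intervalIntegral
  exact (key _ _ measurable_const hs).sub (key _ _ hs measurable_const)

lemma measurable_τbel {α : Type*} [MeasurableSpace α] (T : ℝ) (K k : ℕ) {p : α → ℕ → ℝ}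
    {w u : α → ℝ} (hp : Measurable p) (hw : Measurable w) (hu : Measurable u) :
    Measurable (fun x => τbel T K k (p x) (w x) (u x)) := by
  have hpn : ∀ n, Measurable (fun x => p x n) := fun n => measurable_pi_iff.1 hp n
  have hg : ∀ n, Measurable (fun x => p x n * gmin (n - k) (T - w x) (u x)) := fun n =>
    (hpn n).mul (Measurable.gmin_comp _ (measurable_const.sub hw) hu)
  refine measurable_pi_iff.2 fun n => ?_
  exact (hg n).div (Finset.measurable_fun_sum _ fun i _ => hg i)

/-- Joint measurability needs no integrability, since the Bochner integral of a
jointly measurable function is a measurable function of the parameter in all cases. -/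
lemma measurable_Jaux (T Rbar η : ℝ) (fR : ℝ → ℝ) (hf : Measurable fR) (K m : ℕ) :
    Measurable (fun x : (ℕ → ℝ) × ℝ × ℝ => Jaux T Rbar η fR K m x.1 x.2.1 x.2.2) := by
  induction m with
  | zero => unfold Jaux; fun_prop
  | succ m ih =>
    unfold Jaux contCost
    have hpn : ∀ n, Measurable (fun x : (ℕ → ℝ) × ℝ × ℝ => x.1 n) :=
      fun n => measurable_pi_iff.1 measurable_fst n
    refine Measurable.min (by fun_prop) (Measurable.add ((hpn _).mul (by fun_prop)) ?_)
    refine Finset.measurable_fun_sum _ fun n _ => (hpn n).mul ?_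
    refine measurable_param_integral (f := fun (x : (ℕ → ℝ) × ℝ × ℝ) r => ∫ u in (0:ℝ)..(T - x.2.1),
        (u + Jaux T Rbar η fR K m (τbel T K (K - (m + 1)) x.1 x.2.1 u) (x.2.1 + u) (max x.2.2 r))
          * gmin (n - (K - (m + 1))) (T - x.2.1) u * fR r) ?_ measurable_const
    refine measurable_param_integral (α := ((ℕ → ℝ) × ℝ × ℝ) × ℝ) (f := fun y u =>
        (u + Jaux T Rbar η fR K m (τbel T K (K - (m + 1)) y.1.1 y.1.2.1 u) (y.1.2.1 + u)
          (max y.1.2.2 y.2))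
          * gmin (n - (K - (m + 1))) (T - y.1.2.1) u * fR y.2) ?_ (by fun_prop)
    refine Measurable.mul (Measurable.mul (measurable_snd.add ?_)
      (Measurable.gmin_comp _ (by fun_prop) (by fun_prop))) (by fun_prop)
    exact ih.comp ((measurable_τbel T K _ (by fun_prop) (by fun_prop) (by fun_prop)).prodMk
      (Measurable.prodMk (by fun_prop) (by fun_prop)))

/-! ### Iterated integrals of bounded functions against the reward density -/

/-- Jointly measurable and bounded on `[0,R] × (0,s]`. -/
def NiceOn (R s : ℝ) (Φ : ℝ → ℝ → ℝ) : Prop :=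
  Measurable (Function.uncurry Φ) ∧ ∃ C, ∀ r ∈ Icc 0 R, ∀ u ∈ Ioc 0 s, |Φ r u| ≤ C

lemma NiceOn.add {R s : ℝ} {Φ Ψ : ℝ → ℝ → ℝ} (h1 : NiceOn R s Φ) (h2 : NiceOn R s Ψ) :
    NiceOn R s (fun r u => Φ r u + Ψ r u) := by
  obtain ⟨m1, C1, b1⟩ := h1
  obtain ⟨m2, C2, b2⟩ := h2
  exact ⟨m1.add m2, C1 + C2, fun r hr u hu =>
    (abs_add_le _ _).trans (add_le_add (b1 r hr u hu) (b2 r hr u hu))⟩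

lemma NiceOn.const_mul {R s : ℝ} {Φ : ℝ → ℝ → ℝ} (h1 : NiceOn R s Φ) (c : ℝ) :
    NiceOn R s (fun r u => c * Φ r u) := by
  obtain ⟨m1, C1, b1⟩ := h1
  exact ⟨m1.const_mul c, |c| * C1, fun r hr u hu => by
    rw [abs_mul]; exact mul_le_mul_of_nonneg_left (b1 r hr u hu) (abs_nonneg c)⟩

lemma NiceOn.sum {R s : ℝ} (S : Finset ℕ) (c : ℕ → ℝ) {Φ : ℕ → ℝ → ℝ → ℝ}
    (h : ∀ n ∈ S, NiceOn R s (Φ n)) :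
    NiceOn R s (fun r u => ∑ n ∈ S, c n * Φ n r u) := by
  induction S using Finset.induction_on with
  | empty => exact ⟨by simp only [Finset.sum_empty]; exact measurable_const, 0, by simp⟩
  | insert a S ha ih =>
    simp only [Finset.sum_insert ha]
    exact ((h a (by simp)).const_mul _).add (ih fun n hn => h n (by simp [hn]))

/-- The iterated integral of `Φ` against Lebesgue measure in `u` and the density `f` in `r`. -/
noncomputable def dblInt (R : ℝ) (f : ℝ → ℝ) (s : ℝ) (Φ : ℝ → ℝ → ℝ) : ℝ :=
  ∫ r in (0:ℝ)..R, ∫ u in (0:ℝ)..s, Φ r u * f r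

lemma NiceOn.inner {R s : ℝ} (hs : 0 ≤ s) {Φ : ℝ → ℝ → ℝ} (h : NiceOn R s Φ) {r : ℝ}
    (hr : r ∈ Icc 0 R) (f : ℝ → ℝ) :
    IntervalIntegrable (fun u => Φ r u * f r) volume 0 s := by
  obtain ⟨m, C, b⟩ := h
  refine IntervalIntegrable.mul_const ?_ _
  refine (intervalIntegrable_const (c := C)).mono_fun
    (m.comp (measurable_const.prodMk measurable_id)).aestronglyMeasurable ?_
  refine (ae_restrict_iff' measurableSet_uIoc).2 (Filter.Eventually.of_forall fun u hu => ?_)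
  rw [uIoc_of_le hs] at hu
  exact (b r hr u hu).trans (le_abs_self C)

lemma inner_abs_le {s C r : ℝ} (hs : 0 ≤ s) {Φ f : ℝ → ℝ} (hf : 0 ≤ f r)
    (b : ∀ u ∈ Ioc 0 s, |Φ u| ≤ C) :
    |∫ u in (0:ℝ)..s, Φ u * f r| ≤ C * s * f r := by
  have := intervalIntegral.norm_integral_le_of_norm_le_const (a := 0) (b := s) (C := C * f r)
    (f := fun u => Φ u * f r) (by
      intro u hu
      rw [uIoc_of_le hs] at hu
      rw [Real.norm_eq_abs, abs_mul, abs_of_nonneg hf]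
      exact mul_le_mul_of_nonneg_right (b u hu) hf)
  rw [Real.norm_eq_abs, sub_zero, abs_of_nonneg hs] at this
  linarith

lemma NiceOn.outer {R s : ℝ} (hR : 0 ≤ R) (hs : 0 ≤ s) {Φ : ℝ → ℝ → ℝ} (h : NiceOn R s Φ)
    {f : ℝ → ℝ} (hf0 : ∀ r, 0 ≤ f r) (hfm : Measurable f)
    (hfi : IntervalIntegrable f volume 0 R) :
    IntervalIntegrable (fun r => ∫ u in (0:ℝ)..s, Φ r u * f r) volume 0 R := by
  obtain ⟨m, C, b⟩ := h
  have hm : Measurable (fun r => ∫ u in (0:ℝ)..s, Φ r u * f r) :=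
    measurable_param_integral (f := fun r u => Φ r u * f r)
      (m.mul (hfm.comp measurable_fst)) measurable_const
  refine (hfi.const_mul (C * s)).mono_fun hm.aestronglyMeasurable ?_
  refine (ae_restrict_iff' measurableSet_uIoc).2 (Filter.Eventually.of_forall fun r hr => ?_)
  rw [uIoc_of_le hR] at hr
  exact (inner_abs_le hs (hf0 r) (b r ⟨hr.1.le, hr.2⟩)).trans (le_abs_self _)

lemma dblInt_add {R s : ℝ} (hR : 0 ≤ R) (hs : 0 ≤ s) {Φ Ψ : ℝ → ℝ → ℝ} (h1 : NiceOn R s Φ)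
    (h2 : NiceOn R s Ψ) {f : ℝ → ℝ} (hf0 : ∀ r, 0 ≤ f r) (hfm : Measurable f)
    (hfi : IntervalIntegrable f volume 0 R) :
    dblInt R f s (fun r u => Φ r u + Ψ r u) = dblInt R f s Φ + dblInt R f s Ψ := by
  unfold dblInt
  rw [← intervalIntegral.integral_add (h1.outer hR hs hf0 hfm hfi) (h2.outer hR hs hf0 hfm hfi)]
  refine intervalIntegral.integral_congr fun r hr => ?_
  rw [uIcc_of_le hR] at hr
  simp only [add_mul]
  exact intervalIntegral.integral_add (h1.inner hs hr f) (h2.inner hs hr f)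

lemma dblInt_const_mul (R : ℝ) (f : ℝ → ℝ) (s c : ℝ) (Φ : ℝ → ℝ → ℝ) :
    dblInt R f s (fun r u => c * Φ r u) = c * dblInt R f s Φ := by
  unfold dblInt
  simp only [mul_assoc, intervalIntegral.integral_const_mul]

lemma dblInt_sum {R s : ℝ} (hR : 0 ≤ R) (hs : 0 ≤ s) (S : Finset ℕ) (c : ℕ → ℝ)
    {Φ : ℕ → ℝ → ℝ → ℝ} (h : ∀ n ∈ S, NiceOn R s (Φ n)) {f : ℝ → ℝ} (hf0 : ∀ r, 0 ≤ f r)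
    (hfm : Measurable f) (hfi : IntervalIntegrable f volume 0 R) :
    dblInt R f s (fun r u => ∑ n ∈ S, c n * Φ n r u) = ∑ n ∈ S, c n * dblInt R f s (Φ n) := by
  induction S using Finset.induction_on with
  | empty => simp [dblInt]
  | insert a S ha ih =>
    simp only [Finset.sum_insert ha]
    rw [dblInt_add hR hs ((h a (by simp)).const_mul _)
      (NiceOn.sum S c fun n hn => h n (by simp [hn])) hf0 hfm hfi,
      dblInt_const_mul, ih fun n hn => h n (by simp [hn])]

lemma dblInt_mono {R s : ℝ} (hR : 0 ≤ R) (hs : 0 ≤ s) {Φ Ψ : ℝ → ℝ → ℝ} (h1 : NiceOn R s Φ)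
    (h2 : NiceOn R s Ψ) {f : ℝ → ℝ} (hf0 : ∀ r, 0 ≤ f r) (hfm : Measurable f)
    (hfi : IntervalIntegrable f volume 0 R)
    (hle : ∀ r ∈ Icc 0 R, ∀ u ∈ Icc 0 s, Φ r u ≤ Ψ r u) :
    dblInt R f s Φ ≤ dblInt R f s Ψ := by
  unfold dblInt
  refine intervalIntegral.integral_mono_on hR (h1.outer hR hs hf0 hfm hfi)
    (h2.outer hR hs hf0 hfm hfi) fun r hr => ?_
  exact intervalIntegral.integral_mono_on hs (h1.inner hs hr f) (h2.inner hs hr f)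
    fun u hu => mul_le_mul_of_nonneg_right (hle r hr u hu) (hf0 r)

lemma gmin_zero (s u : ℝ) : gmin 0 s u = 0 := by
  simp [gmin]

lemma gmin_le (m : ℕ) {s u : ℝ} (hu : u ∈ Ioc 0 s) : gmin m s u ≤ m / s := by
  have hs : 0 < s := hu.1.trans_le hu.2
  rcases m with _ | m
  · simp [gmin_zero]
  rw [gmin, if_pos ⟨hu.1.le, hu.2⟩, div_le_div_iff₀ (by positivity) hs]
  have h : (s - u) ^ m ≤ s ^ m := pow_le_pow_left₀ (by linarith [hu.2]) (by linarith [hu.1]) m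
  have h2 : ((m + 1 : ℕ) : ℝ) * s * (s - u) ^ m ≤ ((m + 1 : ℕ) : ℝ) * s * s ^ m :=
    mul_le_mul_of_nonneg_left h (by positivity)
  simp only [Nat.add_sub_cancel, pow_succ]
  linarith

lemma τbel_mem (T : ℝ) (K k : ℕ) {p : ℕ → ℝ} (hp : ∀ n ∈ Finset.Icc (k + 1) K, 0 ≤ p n) (w u : ℝ) :
    ∀ n ∈ Finset.Icc (k + 1) K, 0 ≤ τbel T K k p w u n ∧ τbel T K k p w u n ≤ 1 := by
  intro n hn
  have h0 : ∀ i ∈ Finset.Icc (k + 1) K, 0 ≤ p i * gmin (i - k) (T - w) u :=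
    fun i hi => mul_nonneg (hp i hi) (gmin_nonneg _ _ _)
  exact ⟨div_nonneg (h0 n hn) (Finset.sum_nonneg h0),
    div_le_one_of_le₀ (Finset.single_le_sum h0 hn) (Finset.sum_nonneg h0)⟩

lemma integrand_bound {T R C : ℝ} {K k : ℕ} {J : (ℕ → ℝ) → ℝ → ℝ → ℝ}
    (hC : ∀ p, (∀ n ∈ Finset.Icc (k + 1) K, 0 ≤ p n ∧ p n ≤ 1) → ∀ w ∈ Icc 0 T, ∀ b ∈ Icc 0 R,
      |J p w b| ≤ C) {p : ℕ → ℝ} (hp : ∀ n ∈ Finset.Icc (k + 1) K, 0 ≤ p n) {w b : ℝ}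
    (hw : w ∈ Icc 0 T) (hb : b ∈ Icc 0 R) (n : ℕ) {r : ℝ} (hr : r ∈ Icc 0 R) {u : ℝ}
    (hu : u ∈ Ioc 0 (T - w)) :
    |(u + J (τbel T K k p w u) (w + u) (max b r)) * gmin (n - k) (T - w) u|
      ≤ (T + C) * ((n - k : ℕ) / (T - w)) := by
  have hJ := hC _ (τbel_mem T K k hp w u) (w + u) ⟨by linarith [hw.1, hu.1], by linarith [hu.2]⟩
    (max b r) ⟨hb.1.trans (le_max_left _ _), max_le hb.2 hr.2⟩
  rw [abs_mul, abs_of_nonneg (gmin_nonneg _ _ _)]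
  refine mul_le_mul ?_ (gmin_le _ hu) (gmin_nonneg _ _ _) ?_
  · refine (abs_add_le _ _).trans (add_le_add ?_ hJ)
    rw [abs_of_pos hu.1]; linarith [hu.2, hw.1]
  · linarith [abs_nonneg (J (τbel T K k p w u) (w + u) (max b r)), hw.1, hw.2]

lemma contCost_eq (T R η : ℝ) (f : ℝ → ℝ) (K : ℕ) (J : (ℕ → ℝ) → ℝ → ℝ → ℝ) (k : ℕ) (p : ℕ → ℝ)
    (w b : ℝ) : contCost T R η f K J k p w b = p k * (T - w - η * b) +
      ∑ n ∈ Finset.Icc (k + 1) K, p n * dblInt R f (T - w) (fun r u =>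
        (u + J (τbel T K k p w u) (w + u) (max b r)) * gmin (n - k) (T - w) u) := rfl

lemma Jaux_bounded {T R η : ℝ} (hT : 0 < T) (hR : 0 < R) (hη : 0 < η) {f : ℝ → ℝ}
    (hf0 : ∀ r, 0 ≤ f r) (hf1 : ∫ r in (0:ℝ)..R, f r = 1)
    (hfi : IntervalIntegrable f volume 0 R) (K m : ℕ) (hm : m + 1 ≤ K) :
    ∃ C, 0 ≤ C ∧ ∀ p : ℕ → ℝ, (∀ n ∈ Finset.Icc (K - m) K, 0 ≤ p n ∧ p n ≤ 1) →
      ∀ w ∈ Icc 0 T, ∀ b ∈ Icc 0 R, |Jaux T R η f K m p w b| ≤ C := by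
  have hηb : ∀ b ∈ Icc 0 R, |-η * b| ≤ η * R := by
    intro b hb
    rw [abs_mul, abs_neg, abs_of_pos hη, abs_of_nonneg hb.1]
    exact mul_le_mul_of_nonneg_left hb.2 hη.le
  induction m with
  | zero => exact ⟨η * R, by positivity, fun p _ w _ b hb => hηb b hb⟩
  | succ m ih =>
    obtain ⟨C, hC0, hC⟩ := ih (by omega)
    have hk : K - m = K - (m + 1) + 1 := by omega
    rw [hk] at hC
    set k := K - (m + 1) with hkdef
    set B : ℝ := (T + η * R) + ∑ n ∈ Finset.Icc (k + 1) K, (T + C) * ((n - k : ℕ) : ℝ) with hB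
    have hB0 : 0 ≤ B := by positivity
    refine ⟨η * R + B, by positivity, fun p hp w hw b hb => ?_⟩
    have hc : |contCost T R η f K (Jaux T R η f K m) k p w b| ≤ B := by
      rw [contCost_eq]
      refine (abs_add_le _ _).trans (add_le_add ?_ ?_)
      · have hpk := hp k (by simp [hkdef])
        have h1 : |T - w - η * b| ≤ T + η * R := by
          have h2 : η * b ≤ η * R := mul_le_mul_of_nonneg_left hb.2 hη.le
          have h3 : 0 ≤ η * b := mul_nonneg hη.le hb.1
          rw [abs_le]; constructor <;> linarith [hw.1, hw.2]
        rw [abs_mul, abs_of_nonneg hpk.1]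
        calc p k * |T - w - η * b| ≤ 1 * (T + η * R) :=
              mul_le_mul hpk.2 h1 (abs_nonneg _) zero_le_one
          _ = _ := one_mul _
      · refine (Finset.abs_sum_le_sum_abs _ _).trans (Finset.sum_le_sum fun n hn => ?_)
        have hn' : n ∈ Finset.Icc k K := by
          simp only [Finset.mem_Icc] at hn ⊢; omega
        have hpn := hp n hn'
        have hs : 0 ≤ T - w := by linarith [hw.2]
        have hp' : ∀ n ∈ Finset.Icc (k + 1) K, 0 ≤ p n := fun i hi =>
          (hp i (by simp only [Finset.mem_Icc] at hi ⊢; omega)).1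
        set D : ℝ := (T + C) * ((n - k : ℕ) / (T - w)) * (T - w) with hD
        have hDle : D ≤ (T + C) * ((n - k : ℕ) : ℝ) := by
          rw [hD, mul_assoc]
          refine mul_le_mul_of_nonneg_left ?_ (by positivity)
          rcases hs.eq_or_lt with h0 | h0
          · rw [← h0, mul_zero]; positivity
          · rw [div_mul_cancel₀ _ h0.ne']
        have hI : |dblInt R f (T - w) (fun r u => (u + Jaux T R η f K m (τbel T K k p w u) (w + u)
            (max b r)) * gmin (n - k) (T - w) u)| ≤ D := by
          have h := intervalIntegral.norm_integral_le_of_norm_le (μ := volume) hR.le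
            (f := fun r => ∫ u in (0:ℝ)..(T - w), (u + Jaux T R η f K m (τbel T K k p w u) (w + u)
              (max b r)) * gmin (n - k) (T - w) u * f r) (g := fun r => D * f r)
            (Filter.Eventually.of_forall fun r hr => inner_abs_le hs (hf0 r) fun u hu =>
              integrand_bound hC hp' hw hb n ⟨hr.1.le, hr.2⟩ hu) (hfi.const_mul D)
          rw [intervalIntegral.integral_const_mul, hf1, mul_one] at h
          exact h
        rw [abs_mul, abs_of_nonneg hpn.1]
        calc _ ≤ 1 * ((T + C) * ((n - k : ℕ) : ℝ)) :=
              mul_le_mul hpn.2 (hI.trans hDle) (abs_nonneg _) zero_le_one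
          _ = _ := one_mul _
    have hηR : 0 ≤ η * R := by positivity
    refine (abs_min_le_max_abs_abs).trans (max_le ?_ ?_)
    · linarith [hηb b hb]
    · exact hc.trans (by linarith)

/-! ### Superadditivity and homogeneity -/

/-- The cone of nonnegative vectors supported on `{k,…,K}`. -/
def InCone (K k : ℕ) (p : ℕ → ℝ) : Prop :=
  (∀ n, 0 ≤ p n) ∧ ∀ n, n < k ∨ K < n → p n = 0

lemma InCone.add {K k : ℕ} {p q : ℕ → ℝ} (hp : InCone K k p) (hq : InCone K k q) :
    InCone K k (fun n => p n + q n) :=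
  ⟨fun n => add_nonneg (hp.1 n) (hq.1 n), fun n hn => by simp [hp.2 n hn, hq.2 n hn]⟩

lemma InCone.smul {K k : ℕ} {p : ℕ → ℝ} (hp : InCone K k p) {c : ℝ} (hc : 0 ≤ c) :
    InCone K k (fun n => c * p n) :=
  ⟨fun n => mul_nonneg hc (hp.1 n), fun n hn => by simp [hp.2 n hn]⟩

/-- The perspective `x ↦ S x * J (x / S x)` of `J` with `S x = ∑ n ∈ {k,…,K}, x n`; it is `0`
at vectors with `S x = 0`. -/
noncomputable def persp (K k : ℕ) (J : (ℕ → ℝ) → ℝ) (x : ℕ → ℝ) : ℝ :=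
  (∑ n ∈ Finset.Icc k K, x n) * J (fun n => x n / ∑ ℓ ∈ Finset.Icc k K, x ℓ)

lemma contCost_smul (T R η : ℝ) (f : ℝ → ℝ) (K : ℕ) (J : (ℕ → ℝ) → ℝ → ℝ → ℝ) (k : ℕ) (p : ℕ → ℝ)
    (w b c : ℝ) :
    contCost T R η f K J k (fun n => c * p n) w b = c * contCost T R η f K J k p w b := by
  rcases eq_or_ne c 0 with rfl | hc
  · simp [contCost]
  have hτ : ∀ u, τbel T K k (fun n => c * p n) w u = τbel T K k p w u := by
    intro u
    funext n
    simp only [τbel, mul_assoc, ← Finset.mul_sum]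
    exact mul_div_mul_left _ _ hc
  simp only [contCost, hτ, mul_add, Finset.mul_sum, mul_assoc]

/-- Superadditivity of the perspective of the next value function passes through the integral. -/
lemma contCost_superadd {T R η : ℝ} (hR : 0 < R) {f : ℝ → ℝ}
    (hf0 : ∀ r, 0 ≤ f r) (hfm : Measurable f) (hfi : IntervalIntegrable f volume 0 R)
    {K k : ℕ} {J : (ℕ → ℝ) → ℝ → ℝ → ℝ}
    (hJm : Measurable (fun x : (ℕ → ℝ) × ℝ × ℝ => J x.1 x.2.1 x.2.2)) {C : ℝ}
    (hC : ∀ p, (∀ n ∈ Finset.Icc (k + 1) K, 0 ≤ p n ∧ p n ≤ 1) → ∀ w ∈ Icc 0 T, ∀ b ∈ Icc 0 R,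
      |J p w b| ≤ C)
    (hJ : ∀ w ∈ Icc 0 T, ∀ b ∈ Icc 0 R, ∀ x y, InCone K (k + 1) x → InCone K (k + 1) y →
      persp K (k + 1) (fun p => J p w b) x + persp K (k + 1) (fun p => J p w b) y ≤
        persp K (k + 1) (fun p => J p w b) (fun n => x n + y n))
    {w b : ℝ} (hw : w ∈ Icc 0 T) (hb : b ∈ Icc 0 R) {p q : ℕ → ℝ} (hp : InCone K k p)
    (hq : InCone K k q) :
    contCost T R η f K J k p w b + contCost T R η f K J k q w b ≤
      contCost T R η f K J k (fun n => p n + q n) w b := by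
  have hs : 0 ≤ T - w := by linarith [hw.2]
  set Φ : (ℕ → ℝ) → ℕ → ℝ → ℝ → ℝ := fun p n r u =>
    (u + J (τbel T K k p w u) (w + u) (max b r)) * gmin (n - k) (T - w) u with hΦ
  have hnice : ∀ p, InCone K k p → ∀ n ∈ Finset.Icc (k + 1) K, NiceOn R (T - w) (Φ p n) := by
    intro p hp n _
    refine ⟨?_, _, fun r hr u hu => integrand_bound hC (fun i _ => hp.1 i) hw hb n hr hu⟩
    refine Measurable.mul (measurable_snd.add ?_)
      (Measurable.gmin_comp _ measurable_const measurable_snd)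
    exact hJm.comp ((measurable_τbel T K k measurable_const measurable_const
      measurable_snd).prodMk (Measurable.prodMk (by fun_prop) (by fun_prop)))
  set A : (ℕ → ℝ) → ℝ → ℝ → ℝ := fun p r u => ∑ n ∈ Finset.Icc (k + 1) K, p n * Φ p n r u with hA
  have hAnice : ∀ p, InCone K k p → NiceOn R (T - w) (A p) := fun p hp =>
    NiceOn.sum _ _ (hnice p hp)
  have hcost : ∀ p, InCone K k p → contCost T R η f K J k p w b =
      p k * (T - w - η * b) + dblInt R f (T - w) (A p) := by
    intro p hp
    rw [contCost_eq, hA, dblInt_sum hR.le hs _ _ (hnice p hp) hf0 hfm hfi]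
  -- The weighted integrand is a linear term plus the perspective at `x n = p n * gmin (n - k) _ u`.
  have hAp : ∀ p r u, A p r u = u * (∑ n ∈ Finset.Icc (k + 1) K, p n * gmin (n - k) (T - w) u) +
      persp K (k + 1) (fun p => J p (w + u) (max b r)) (fun n => p n * gmin (n - k) (T - w) u) := by
    intro p r u
    have : (fun n => p n * gmin (n - k) (T - w) u /
      ∑ ℓ ∈ Finset.Icc (k + 1) K, p ℓ * gmin (ℓ - k) (T - w) u) = τbel T K k p w u := rfl
    simp only [persp, this, hA, hΦ]
    rw [Finset.mul_sum, Finset.sum_mul, ← Finset.sum_add_distrib]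
    exact Finset.sum_congr rfl fun n _ => by ring
  have hcone : ∀ p u, InCone K k p → InCone K (k + 1) (fun n => p n * gmin (n - k) (T - w) u) := by
    intro p u hp
    refine ⟨fun n => mul_nonneg (hp.1 n) (gmin_nonneg _ _ _), fun n hn => ?_⟩
    rcases hn with hn | hn
    · have : n - k = 0 := by omega
      simp [this, gmin_zero]
    · simp [hp.2 n (Or.inr hn)]
  have hle : dblInt R f (T - w) (A p) + dblInt R f (T - w) (A q) ≤
      dblInt R f (T - w) (A (fun n => p n + q n)) := by
    rw [← dblInt_add hR.le hs (hAnice p hp) (hAnice q hq) hf0 hfm hfi]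
    refine dblInt_mono hR.le hs ((hAnice p hp).add (hAnice q hq)) (hAnice _ (hp.add hq)) hf0 hfm hfi
      fun r hr u hu => ?_
    have h := hJ (w + u) ⟨by linarith [hw.1, hu.1], by linarith [hu.2]⟩ (max b r)
      ⟨hb.1.trans (le_max_left _ _), max_le hb.2 hr.2⟩ _ _ (hcone p u hp) (hcone q u hq)
    simp only [hAp, add_mul, Finset.sum_add_distrib]
    linarith
  rw [hcost p hp, hcost q hq, hcost _ (hp.add hq)]
  simp only [add_mul]
  linarith

lemma Jaux_perspective_superadd {T R η : ℝ} (hT : 0 < T) (hR : 0 < R) (hη : 0 < η) {f : ℝ → ℝ}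
    (hf0 : ∀ r, 0 ≤ f r) (hfm : Measurable f) (hf1 : ∫ r in (0:ℝ)..R, f r = 1)
    (hfi : IntervalIntegrable f volume 0 R) (K m : ℕ) (hm : m + 1 ≤ K) :
    ∀ w ∈ Icc 0 T, ∀ b ∈ Icc 0 R, ∀ x y, InCone K (K - m) x → InCone K (K - m) y →
      persp K (K - m) (fun p => Jaux T R η f K m p w b) x +
        persp K (K - m) (fun p => Jaux T R η f K m p w b) y ≤
        persp K (K - m) (fun p => Jaux T R η f K m p w b) (fun n => x n + y n) := by
  induction m with
  | zero =>
    intro w _ b _ x y _ _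
    simp only [persp, Jaux, Finset.sum_add_distrib]
    linarith
  | succ m ih =>
    obtain ⟨C, -, hC⟩ := Jaux_bounded hT hR hη hf0 hf1 hfi K m (by omega)
    specialize ih (by omega)
    have hk : K - m = K - (m + 1) + 1 := by omega
    rw [hk] at hC ih
    intro w hw b hb x y hx hy
    set k := K - (m + 1) with hkdef
    have hG : ∀ x, InCone K k x → persp K k (fun p => Jaux T R η f K (m + 1) p w b) x =
        min ((∑ n ∈ Finset.Icc k K, x n) * (-η * b))
          (contCost T R η f K (Jaux T R η f K m) k x w b) := by
      intro x hx
      set S := ∑ n ∈ Finset.Icc k K, x n with hS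
      have hS0 : 0 ≤ S := Finset.sum_nonneg fun n _ => hx.1 n
      have hxS : x = fun n => S * (x n / S) := by
        funext n
        rcases eq_or_ne S 0 with h0 | h0
        · rw [h0, zero_mul]
          by_cases hn : n ∈ Finset.Icc k K
          · exact (Finset.sum_eq_zero_iff_of_nonneg fun n _ => hx.1 n).1 (hS.symm.trans h0) n hn
          · exact hx.2 n (by simp only [Finset.mem_Icc] at hn; omega)
        · field_simp
      have hc : contCost T R η f K (Jaux T R η f K m) k x w b =
          S * contCost T R η f K (Jaux T R η f K m) k (fun n => x n / S) w b := by
        rw [← contCost_smul, ← hxS]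
      rw [hc, ← mul_min_of_nonneg _ _ hS0]
      rfl
    rw [hG x hx, hG y hy, hG _ (hx.add hy)]
    have hsup := contCost_superadd (η := η) hR hf0 hfm hfi (measurable_Jaux T R η f hfm K m) hC ih
      hw hb hx hy
    simp only [Finset.sum_add_distrib, add_mul]
    exact le_min (add_le_add (min_le_left _ _) (min_le_left _ _))
      ((add_le_add (min_le_right _ _) (min_le_right _ _)).trans hsup)

/-- Concavity of the continuing cost `c_k(·,w,b)` on the simplex `P_k`, and
consequently of the optimal cost-to-go `J_k(·,w,b)`. -/
theorem continuing_cost_concave (T Rbar η : ℝ) (hT : 0 < T) (hRbar : 0 < Rbar) (hη : 0 < η)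
    (fR : ℝ → ℝ) (hfR_nonneg : ∀ r, 0 ≤ fR r)
    (hfR_supp : ∀ r, r < 0 ∨ Rbar < r → fR r = 0)
    (hfR_meas : Measurable fR)
    (hfR_int : ∫ r in (0:ℝ)..Rbar, fR r = 1)
    (K : ℕ) (hK : 2 ≤ K)
    (k : ℕ) (hk1 : 1 ≤ k) (hk2 : k ≤ K - 1)
    (w b : ℝ) (hw : w ∈ Set.Ioo 0 T) (hb : b ∈ Set.Icc 0 Rbar) :
    (∀ p q : ℕ → ℝ, memP K k p → memP K k q → ∀ lam : ℝ, lam ∈ Set.Icc (0:ℝ) 1 →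
      lam * cCost T Rbar η fR K k p w b + (1 - lam) * cCost T Rbar η fR K k q w b ≤
        cCost T Rbar η fR K k (fun n => lam * p n + (1 - lam) * q n) w b) ∧
    (∀ p q : ℕ → ℝ, memP K k p → memP K k q → ∀ lam : ℝ, lam ∈ Set.Icc (0:ℝ) 1 →
      lam * Jval T Rbar η fR K k p w b + (1 - lam) * Jval T Rbar η fR K k q w b ≤
        Jval T Rbar η fR K k (fun n => lam * p n + (1 - lam) * q n) w b) := by
  have hfi : IntervalIntegrable fR volume 0 Rbar := by
    by_contra h
    rw [intervalIntegral.integral_undef h] at hfR_int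
    exact zero_ne_one hfR_int
  have hc : ∀ p q : ℕ → ℝ, memP K k p → memP K k q → ∀ lam : ℝ, lam ∈ Set.Icc (0:ℝ) 1 →
      lam * cCost T Rbar η fR K k p w b + (1 - lam) * cCost T Rbar η fR K k q w b ≤
        cCost T Rbar η fR K k (fun n => lam * p n + (1 - lam) * q n) w b := by
    intro p q hp hq lam hlam
    have hk : K - (K - (k + 1)) = k + 1 := by omega
    have hm : K - (k + 1) + 1 ≤ K := by omega
    obtain ⟨C, -, hC⟩ := Jaux_bounded hT hRbar hη hfR_nonneg hfR_int hfi K (K - (k + 1)) hm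
    have hJ := Jaux_perspective_superadd hT hRbar hη hfR_nonneg hfR_meas hfR_int hfi K
      (K - (k + 1)) hm
    rw [hk] at hC hJ
    have hp' : InCone K k p := ⟨hp.1, hp.2.1⟩
    have hq' : InCone K k q := ⟨hq.1, hq.2.1⟩
    unfold cCost
    rw [← contCost_smul, ← contCost_smul]
    exact contCost_superadd hRbar hfR_nonneg hfR_meas hfi
      (measurable_Jaux T Rbar η fR hfR_meas K _) hC hJ ⟨hw.1.le, hw.2.le⟩ hb
      (hp'.smul hlam.1) (hq'.smul (sub_nonneg.2 hlam.2))
  refine ⟨hc, fun p q hp hq lam hlam => ?_⟩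
  have hJv : ∀ p, Jval T Rbar η fR K k p w b = min (-η * b) (cCost T Rbar η fR K k p w b) := by
    intro p
    have h1 : K - k = K - (k + 1) + 1 := by omega
    have h2 : K - (K - (k + 1) + 1) = k := by omega
    rw [Jval, h1, Jaux, h2]
    rfl
  simp only [hJv]
  have h1 : 0 ≤ 1 - lam := sub_nonneg.2 hlam.2
  refine le_min ?_ (le_trans ?_ (hc p q hp hq lam hlam))
  · calc _ ≤ lam * (-η * b) + (1 - lam) * (-η * b) :=
          add_le_add (mul_le_mul_of_nonneg_left (min_le_left _ _) hlam.1)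
            (mul_le_mul_of_nonneg_left (min_le_left _ _) h1)
      _ = -η * b := by ring
  · exact add_le_add (mul_le_mul_of_nonneg_left (min_le_right _ _) hlam.1)
      (mul_le_mul_of_nonneg_left (min_le_right _ _) h1)
end

section
/- Fix k with 1 ≤ k ≤ K−1, an integer n with k < n ≤ K, and (w,b) ∈ (0,T)×[0,R̄]. If p ∈ P_k satisfies p(k) + p(n) = 1 (all other components zero), then J_k(p,w,b) = min{ −η b, p(k)(T − w − η b) + p(n)(−η φ_{n−k}(w,b)) }. -/
/-!
A belief supported on `{k, n}` with `k < n` becomes, once stage `k + 1` is reached, certain of `n`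
(`τbel_eq_single`). A certain belief stays certain, so backward induction (`Jaux_single`) gives its
value as `-η * max b (φ_{n-k}(w, b))`: by `contCost_two_point`, one step of the value recursion is
`-η` times one step of the recursion for `φ`, the integrands agreeing pointwise on
`0 < u < T - w`. The theorem is `contCost_two_point` applied once more, at stage `k`. Only equality
of integrands is used, so no integrability argument is required.
-/

open MeasureTheory Set

/-- The next belief is certain: after a step in which the count did not stop at `k`, the only
remaining possibility is `k + 1 + d`. The point `u = T - w` is excluded because the density
vanishes there for `d ≥ 1`. -/
lemma τbel_eq_single {T w u : ℝ} {K k d : ℕ} {p : ℕ → ℝ} (hd : k + 1 + d ≤ K)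
    (hpn : p (k + 1 + d) ≠ 0) (hother : ∀ m, m ≠ k → m ≠ k + 1 + d → p m = 0)
    (hu0 : 0 < u) (hu : u < T - w) :
    τbel T K k p w u = Pi.single (k + 1 + d) 1 := by
  have hg : gmin (k + 1 + d - k) (T - w) u ≠ 0 := by
    have h1 : k + 1 + d - k = d + 1 := by omega
    have h2 : (0 : ℝ) < T - w := by linarith
    have h3 : (0 : ℝ) < T - w - u := by linarith
    rw [h1, gmin, if_pos ⟨hu0.le, hu.le⟩]
    positivity
  have hsum : ∑ ℓ ∈ Finset.Icc (k + 1) K, p ℓ * gmin (ℓ - k) (T - w) u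
      = p (k + 1 + d) * gmin (k + 1 + d - k) (T - w) u := by
    refine Finset.sum_eq_single_of_mem _ (Finset.mem_Icc.2 ⟨by omega, hd⟩) ?_
    intro ℓ hℓ hne
    have := (Finset.mem_Icc.1 hℓ).1
    rw [hother ℓ (by omega) hne, zero_mul]
  funext m
  rw [τbel, hsum]
  by_cases hm : m = k + 1 + d
  · subst hm
    rw [Pi.single_eq_same, div_self (mul_ne_zero hpn hg)]
  · rw [Pi.single_eq_of_ne hm]
    by_cases hmk : m = k
    · -- `p k` may be nonzero, but `gmin 0 = 0`.
      subst hmk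
      simp [gmin]
    · rw [hother m hmk hm, zero_mul, zero_div]

/-- Continuing cost of a two-point belief, given the value of certain beliefs at the next stage. -/
lemma contCost_two_point {T Rbar η : ℝ} (hη : 0 < η) (fR : ℝ → ℝ)
    {K k d : ℕ} (hd : k + 1 + d ≤ K) (J : (ℕ → ℝ) → ℝ → ℝ → ℝ)
    (hJ : ∀ w ∈ Ioo 0 T, ∀ b, 0 ≤ b →
      J (Pi.single (k + 1 + d) 1) w b = -η * max b (phi T Rbar η fR d w b))
    {w b : ℝ} (hw : w ∈ Ioo 0 T) (hb : 0 ≤ b) {p : ℕ → ℝ}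
    (hother : ∀ m, m ≠ k → m ≠ k + 1 + d → p m = 0) :
    contCost T Rbar η fR K J k p w b =
      p k * (T - w - η * b) + p (k + 1 + d) * (-η * phi T Rbar η fR (d + 1) w b) := by
  rw [contCost, Finset.sum_eq_single_of_mem (k + 1 + d) (Finset.mem_Icc.2 ⟨by omega, hd⟩)]
  swap
  · intro ℓ hℓ hne
    have := (Finset.mem_Icc.1 hℓ).1
    rw [hother ℓ (by omega) hne, zero_mul]
  congr 1
  by_cases hpn : p (k + 1 + d) = 0
  · simp [hpn]
  congr 1
  have h1 : k + 1 + d - k = d + 1 := by omega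
  rw [phi, ← intervalIntegral.integral_const_mul, h1]
  refine intervalIntegral.integral_congr fun r _ => ?_
  rw [← intervalIntegral.integral_const_mul]
  refine intervalIntegral.integral_congr_Ioo_of_le (by linarith [hw.2]) fun u hu => ?_
  have hw' : w + u ∈ Ioo 0 T := ⟨by linarith [hw.1, hu.1], by linarith [hu.2]⟩
  rw [τbel_eq_single hd hpn hother hu.1 hu.2, hJ _ hw' _ (hb.trans (le_max_left _ _)),
    max_assoc]
  field_simp
  ring

/-- Value of the belief that is certain of `n` at stage `k`, where `k + m = K` and `d = n - k`. -/
lemma Jaux_single {T Rbar η : ℝ} (hη : 0 < η) (fR : ℝ → ℝ) (K : ℕ) :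
    ∀ m k d : ℕ, k + m = K → k + d ≤ K → ∀ w ∈ Ioo 0 T, ∀ b, 0 ≤ b →
      Jaux T Rbar η fR K m (Pi.single (k + d) 1) w b
        = -η * max b (phi T Rbar η fR d w b) := by
  intro m
  induction m with
  | zero =>
    intro k d hk hd w hw b hb
    obtain rfl : d = 0 := by omega
    simp [Jaux, phi, hb]
  | succ m ih =>
    intro k d hk hd w hw b hb
    have hK : K - (m + 1) = k := by omega
    rw [Jaux, hK]
    beta_reduce
    cases d with
    | zero =>
      -- No further offers arrive, so continuing only adds the waiting cost `T - w ≥ 0`.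
      have hc : contCost T Rbar η fR K (Jaux T Rbar η fR K m) k (Pi.single (k + 0) 1) w b
          = T - w - η * b := by
        rw [contCost, Finset.sum_eq_zero]
        · simp
        · intro ℓ hℓ
          have := (Finset.mem_Icc.1 hℓ).1
          rw [Pi.single_eq_of_ne (by omega), zero_mul]
      rw [hc, phi, max_eq_left hb, min_eq_left]
      linarith [hw.2]
    | succ d =>
      have hkd : k + (d + 1) = k + 1 + d := by omega
      rw [hkd]
      rw [contCost_two_point hη fR (K := K) (by omega) _
        (ih (k + 1) d (by omega) (by omega)) hw hb
        (p := Pi.single (k + 1 + d) 1) (fun j _ hj => Pi.single_eq_of_ne hj _), Pi.single_eq_same,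
        Pi.single_eq_of_ne (by omega)]
      rw [zero_mul, zero_add, one_mul, neg_mul, neg_mul, neg_mul, min_neg_neg,
        mul_max_of_nonneg _ _ hη.le]

/-- Two-points Lemma: if `p ∈ P_k` has all its mass on `k` and on some `n` with
`k < n ≤ K`, then
`J_k(p,w,b) = min{−ηb, p(k)(T−w−ηb) + p(n)(−η φ_{n−k}(w,b))}`. -/
theorem two_point_lemma (T Rbar η : ℝ) (hT : 0 < T) (hRbar : 0 < Rbar) (hη : 0 < η)
    (fR : ℝ → ℝ) (hfR_nonneg : ∀ r, 0 ≤ fR r)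
    (hfR_supp : ∀ r, r < 0 ∨ Rbar < r → fR r = 0)
    (hfR_meas : Measurable fR)
    (hfR_int : ∫ r in (0:ℝ)..Rbar, fR r = 1)
    (K : ℕ) (hK : 2 ≤ K)
    (k : ℕ) (hk1 : 1 ≤ k) (hk2 : k ≤ K - 1)
    (n : ℕ) (hn1 : k < n) (hn2 : n ≤ K)
    (w b : ℝ) (hw : w ∈ Set.Ioo 0 T) (hb : b ∈ Set.Icc 0 Rbar)
    (p : ℕ → ℝ) (hp : memP K k p)
    (hpsum : p k + p n = 1) (hother : ∀ m, m ≠ k → m ≠ n → p m = 0) :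
    Jval T Rbar η fR K k p w b =
      min (-η * b)
        (p k * (T - w - η * b) + p n * (-η * phi T Rbar η fR (n - k) w b)) := by
  obtain ⟨d, rfl⟩ : ∃ d, n = k + 1 + d := ⟨n - (k + 1), by omega⟩
  obtain ⟨m, hm⟩ : ∃ m, K - k = m + 1 := ⟨K - k - 1, by omega⟩
  have hk : K - (m + 1) = k := by omega
  have hd : k + 1 + d - k = d + 1 := by omega
  rw [Jval, hm, Jaux, hk, hd]
  beta_reduce
  rw [contCost_two_point hη fR hn2 _
    (Jaux_single hη fR K m (k + 1) d (by omega) hn2) hw hb.1 hother]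
end

section
/- If β_1(0) ≥ 0, then there exists a unique α ∈ [0,R̄) such that α = β_1(α). -/
/-!
Write `c = T / (η Ñ) > 0`. The map `b ↦ max b r` is `1`-Lipschitz and convex for each `r`, and `fR`
is a probability density on `[0, R̄]`, so `β₁` is `1`-Lipschitz (`abs_beta1_sub_le`) and convex
(`beta1_convex_comb`); moreover `β₁(R̄) = R̄ - c < R̄` (`beta1_Rbar`).

Existence is the intermediate value theorem for `β₁(b) - b`, which is nonnegative at `0` and equals
`-c < 0` at `R̄`. For uniqueness, suppose `x < y < R̄` are both fixed points and write
`y = (1 - t) x + t R̄` with `0 < t`. Convexity gives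
`y = β₁(y) ≤ (1 - t) x + t (R̄ - c) = y - t c < y`, a contradiction.
-/

open MeasureTheory Set

/-- The function `β_1` of the simplified model. -/
noncomputable def beta1 (T Rbar η : ℝ) (Nt : ℕ) (fR : ℝ → ℝ) (b : ℝ) : ℝ :=
  (∫ r in (0:ℝ)..Rbar, max b r * fR r) - T / (η * Nt)

/-- A function with nonzero integral is integrable, the integral of a non-integrable function
being `0` by convention. -/
lemma density_intervalIntegrable {Rbar : ℝ} {fR : ℝ → ℝ}
    (hint : ∫ r in (0:ℝ)..Rbar, fR r = 1) : IntervalIntegrable fR volume 0 Rbar := by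
  by_contra h
  rw [intervalIntegral.integral_undef h] at hint
  exact zero_ne_one hint

lemma max_mul_intervalIntegrable {Rbar : ℝ} {fR : ℝ → ℝ}
    (hint : ∫ r in (0:ℝ)..Rbar, fR r = 1) (b : ℝ) :
    IntervalIntegrable (fun r => max b r * fR r) volume 0 Rbar :=
  (density_intervalIntegrable hint).continuousOn_mul (by fun_prop)

lemma abs_beta1_sub_le {T Rbar η : ℝ} {Nt : ℕ} {fR : ℝ → ℝ} (hRbar : 0 < Rbar)
    (hnn : ∀ r, 0 ≤ fR r) (hint : ∫ r in (0:ℝ)..Rbar, fR r = 1) (a b : ℝ) :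
    |beta1 T Rbar η Nt fR a - beta1 T Rbar η Nt fR b| ≤ |a - b| := by
  have hf := density_intervalIntegrable hint
  have ha := max_mul_intervalIntegrable hint a
  have hb := max_mul_intervalIntegrable hint b
  unfold beta1
  rw [sub_sub_sub_cancel_right, ← intervalIntegral.integral_sub ha hb]
  calc |∫ r in (0:ℝ)..Rbar, (max a r * fR r - max b r * fR r)|
      ≤ ∫ r in (0:ℝ)..Rbar, |max a r * fR r - max b r * fR r| :=
        intervalIntegral.abs_integral_le_integral_abs hRbar.le
    _ ≤ ∫ r in (0:ℝ)..Rbar, |a - b| * fR r := by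
        refine intervalIntegral.integral_mono_on hRbar.le (ha.sub hb).abs (hf.const_mul _) ?_
        intro r _
        rw [← sub_mul, abs_mul, abs_of_nonneg (hnn r)]
        exact mul_le_mul_of_nonneg_right (abs_max_sub_max_le_abs a b r) (hnn r)
    _ = |a - b| := by rw [intervalIntegral.integral_const_mul, hint, mul_one]

lemma beta1_Rbar {T Rbar η : ℝ} {Nt : ℕ} {fR : ℝ → ℝ} (hRbar : 0 < Rbar)
    (hint : ∫ r in (0:ℝ)..Rbar, fR r = 1) :
    beta1 T Rbar η Nt fR Rbar = Rbar - T / (η * Nt) := by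
  have h : ∫ r in (0:ℝ)..Rbar, max Rbar r * fR r = ∫ r in (0:ℝ)..Rbar, Rbar * fR r := by
    refine intervalIntegral.integral_congr fun r hr => ?_
    rw [uIcc_of_le hRbar.le] at hr
    simp only [max_eq_left hr.2]
  rw [beta1, h, intervalIntegral.integral_const_mul, hint, mul_one]

lemma beta1_convex_comb {T Rbar η : ℝ} {Nt : ℕ} {fR : ℝ → ℝ} (hRbar : 0 < Rbar)
    (hnn : ∀ r, 0 ≤ fR r) (hint : ∫ r in (0:ℝ)..Rbar, fR r = 1) (a b : ℝ) {t : ℝ}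
    (ht0 : 0 ≤ t) (ht1 : t ≤ 1) :
    beta1 T Rbar η Nt fR ((1 - t) * a + t * b) ≤
      (1 - t) * beta1 T Rbar η Nt fR a + t * beta1 T Rbar η Nt fR b := by
  have ha := (max_mul_intervalIntegrable hint a).const_mul (1 - t)
  have hb := (max_mul_intervalIntegrable hint b).const_mul t
  have key : ∫ r in (0:ℝ)..Rbar, max ((1 - t) * a + t * b) r * fR r ≤
      ∫ r in (0:ℝ)..Rbar, ((1 - t) * (max a r * fR r) + t * (max b r * fR r)) := by
    refine intervalIntegral.integral_mono_on hRbar.le (max_mul_intervalIntegrable hint _)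
      (ha.add hb) fun r _ => ?_
    have hmax : max ((1 - t) * a + t * b) r ≤ (1 - t) * max a r + t * max b r := by
      have h1 : 0 ≤ 1 - t := by linarith
      apply max_le
      · gcongr <;> exact le_max_left _ _
      · calc r = (1 - t) * r + t * r := by ring
          _ ≤ _ := by gcongr <;> exact le_max_right _ _
    calc _ ≤ ((1 - t) * max a r + t * max b r) * fR r :=
          mul_le_mul_of_nonneg_right hmax (hnn r)
      _ = _ := by ring
  rw [intervalIntegral.integral_add ha hb, intervalIntegral.integral_const_mul,
    intervalIntegral.integral_const_mul] at key
  unfold beta1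
  linarith

/-- Two distinct fixed points below `R̄` would contradict convexity of `β₁` on the segment from the
smaller one to `R̄`. -/
lemma beta1_fixed_not_lt {T Rbar η : ℝ} {Nt : ℕ} {fR : ℝ → ℝ} (hRbar : 0 < Rbar)
    (hc : 0 < T / (η * Nt))
    (hnn : ∀ r, 0 ≤ fR r) (hint : ∫ r in (0:ℝ)..Rbar, fR r = 1) {x y : ℝ}
    (hy : y < Rbar) (hxf : x = beta1 T Rbar η Nt fR x) (hyf : y = beta1 T Rbar η Nt fR y) :
    ¬ x < y := by
  intro hxy
  have hd : 0 < Rbar - x := by linarith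
  obtain ⟨t, ht⟩ : ∃ t, t = (y - x) / (Rbar - x) := ⟨_, rfl⟩
  have ht0 : 0 < t := ht ▸ div_pos (by linarith) hd
  have ht1 : t ≤ 1 := by rw [ht, div_le_one hd]; linarith
  have hcomb : (1 - t) * x + t * Rbar = y := by
    have : t * (Rbar - x) = y - x := by rw [ht, div_mul_cancel₀ _ hd.ne']
    linarith
  have h := beta1_convex_comb (T := T) (η := η) (Nt := Nt) hRbar hnn hint x Rbar ht0.le ht1
  rw [hcomb, ← hyf, ← hxf, beta1_Rbar hRbar hint] at h
  have := mul_pos ht0 hc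
  linarith

/-- If `β_1(0) ≥ 0` then there is a unique `α ∈ [0,R̄)` with `α = β_1(α)`. -/
theorem beta1_unique_fixed_point (T Rbar η : ℝ) (hT : 0 < T) (hRbar : 0 < Rbar) (hη : 0 < η)
    (fR : ℝ → ℝ) (hfR_nonneg : ∀ r, 0 ≤ fR r)
    (hfR_supp : ∀ r, r < 0 ∨ Rbar < r → fR r = 0)
    (hfR_meas : Measurable fR)
    (hfR_int : ∫ r in (0:ℝ)..Rbar, fR r = 1)
    (Nt : ℕ) (hNt : 2 ≤ Nt)
    (hpos : 0 ≤ beta1 T Rbar η Nt fR 0) :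
    ∃! α : ℝ, α ∈ Set.Ico (0:ℝ) Rbar ∧ α = beta1 T Rbar η Nt fR α := by
  have hN : (0:ℝ) < Nt := by exact_mod_cast (by omega : 0 < Nt)
  have hc : 0 < T / (η * Nt) := by positivity
  have hR := beta1_Rbar (T := T) (η := η) (Nt := Nt) hRbar hfR_int
  have hcont : Continuous (beta1 T Rbar η Nt fR) := by
    refine (LipschitzWith.of_dist_le_mul (K := 1) fun a b => ?_).continuous
    simpa [Real.dist_eq] using abs_beta1_sub_le hRbar hfR_nonneg hfR_int a b
  obtain ⟨α, hα, h0⟩ := intermediate_value_Icc' hRbar.le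
    (f := fun b => beta1 T Rbar η Nt fR b - b) (by fun_prop)
    (show (0:ℝ) ∈ Icc _ _ from ⟨by simp only [hR]; linarith, by simpa using hpos⟩)
  have hαf : α = beta1 T Rbar η Nt fR α := (sub_eq_zero.mp h0).symm
  have hαR : α < Rbar := by
    refine lt_of_le_of_ne hα.2 fun h => ?_
    rw [h, hR] at hαf
    linarith
  refine ⟨α, ⟨⟨hα.1, hαR⟩, hαf⟩, ?_⟩
  rintro y ⟨hy, hyf⟩
  exact le_antisymm
    (not_lt.mp (beta1_fixed_not_lt hRbar hc hfR_nonneg hfR_int hy.2 hαf hyf))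
    (not_lt.mp (beta1_fixed_not_lt hRbar hc hfR_nonneg hfR_int hαR hyf hαf))
end

section
/- For every integer ℓ ≥ 1 and every b ∈ [0,R̄], β_{ℓ+1}(b) ≥ β_ℓ(b). (The successive β functions form a nondecreasing sequence of functions.) -/
/-!
Each step of the recursion integrates an integrand that is nondecreasing in the previous function,
against the nonnegative weight `fR`, so the inequality propagates by induction from
`max b r ≤ max b (max r (β₁ (max b r)))`. Comparing Bochner integrals requires integrability of
the integrands: every `β_ℓ` is monotone (`betaAux_monotone`), hence so is each integrand's first
factor as a function of `r`, and a monotone function times an integrable one is integrable on a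
compact interval (`intervalIntegrable_monotone_mul`). The inequality in fact holds for all real `b`.
-/

open MeasureTheory Set

/-- `betaAux m` is the function `β_{m+1}` of the simplified model:
`betaAux 0 = β_1` and `betaAux (m+1) = β_{m+2}` is defined by the recursion. -/
noncomputable def betaAux (T Rbar η : ℝ) (Nt : ℕ) (fR : ℝ → ℝ) : ℕ → ℝ → ℝ
  | 0 => fun b => (∫ r in (0:ℝ)..Rbar, max b r * fR r) - T / (η * Nt)
  | m + 1 => fun b =>
      (∫ r in (0:ℝ)..Rbar,
        max b (max r (betaAux T Rbar η Nt fR m (max b r))) * fR r) - T / (η * Nt)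

lemma intervalIntegrable_monotone_mul {a b : ℝ} (hab : a ≤ b) {f h : ℝ → ℝ}
    (hf : IntervalIntegrable f volume a b) (hh : Monotone h) :
    IntervalIntegrable (fun r => h r * f r) volume a b := by
  rw [intervalIntegrable_iff_integrableOn_Ioc_of_le hab] at hf ⊢
  refine Integrable.bdd_mul (c := max |h a| |h b|) hf hh.measurable.aestronglyMeasurable ?_
  filter_upwards [ae_restrict_mem measurableSet_Ioc] with r hr
  exact abs_le_max_abs_abs (hh hr.1.le) (hh hr.2)

/-- Monotonicity of the first factor of the recursive integrand in the reward and in the current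
best value. -/
lemma max_comp_mono {g : ℝ → ℝ} (hg : Monotone g) {b b' r r' : ℝ} (hb : b ≤ b') (hr : r ≤ r') :
    max b (max r (g (max b r))) ≤ max b' (max r' (g (max b' r'))) :=
  max_le_max hb (max_le_max hr (hg (max_le_max hb hr)))

lemma betaAux_monotone (T Rbar η : ℝ) (hRbar : 0 < Rbar) (fR : ℝ → ℝ)
    (hnn : ∀ r, 0 ≤ fR r) (hint : IntervalIntegrable fR volume 0 Rbar) (Nt m : ℕ) :
    Monotone (betaAux T Rbar η Nt fR m) := by
  induction m with
  | zero =>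
    intro b b' hb
    simp only [betaAux]
    refine sub_le_sub_right (intervalIntegral.integral_mono_on hRbar.le
      (intervalIntegrable_monotone_mul hRbar.le hint fun r r' hr => max_le_max le_rfl hr)
      (intervalIntegrable_monotone_mul hRbar.le hint fun r r' hr => max_le_max le_rfl hr)
      fun r _ => mul_le_mul_of_nonneg_right (max_le_max hb le_rfl) (hnn r)) _
  | succ m ih =>
    intro b b' hb
    simp only [betaAux]
    refine sub_le_sub_right (intervalIntegral.integral_mono_on hRbar.le
      (intervalIntegrable_monotone_mul hRbar.le hint fun r r' hr => max_comp_mono ih le_rfl hr)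
      (intervalIntegrable_monotone_mul hRbar.le hint fun r r' hr => max_comp_mono ih le_rfl hr)
      fun r _ => mul_le_mul_of_nonneg_right (max_comp_mono ih hb le_rfl) (hnn r)) _

lemma betaAux_le_succ (T Rbar η : ℝ) (hRbar : 0 < Rbar) (fR : ℝ → ℝ)
    (hnn : ∀ r, 0 ≤ fR r) (hint : IntervalIntegrable fR volume 0 Rbar) (Nt m : ℕ) (b : ℝ) :
    betaAux T Rbar η Nt fR m b ≤ betaAux T Rbar η Nt fR (m + 1) b := by
  have hmono := betaAux_monotone T Rbar η hRbar fR hnn hint Nt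
  induction m generalizing b with
  | zero =>
    rw [betaAux.eq_2, betaAux.eq_1]
    refine sub_le_sub_right (intervalIntegral.integral_mono_on hRbar.le
      (intervalIntegrable_monotone_mul hRbar.le hint fun r r' hr => max_le_max le_rfl hr)
      (intervalIntegrable_monotone_mul hRbar.le hint
        fun r r' hr => max_comp_mono (hmono 0) le_rfl hr)
      fun r _ => mul_le_mul_of_nonneg_right (max_le_max le_rfl (le_max_left _ _)) (hnn r)) _
  | succ m ih =>
    rw [betaAux.eq_2, betaAux.eq_2]
    refine sub_le_sub_right (intervalIntegral.integral_mono_on hRbar.le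
      (intervalIntegrable_monotone_mul hRbar.le hint
        fun r r' hr => max_comp_mono (hmono m) le_rfl hr)
      (intervalIntegrable_monotone_mul hRbar.le hint
        fun r r' hr => max_comp_mono (hmono (m + 1)) le_rfl hr)
      fun r _ => mul_le_mul_of_nonneg_right
        (max_le_max le_rfl (max_le_max le_rfl (ih _))) (hnn r)) _


/-- The successive `β` functions are pointwise nondecreasing in the index:
for every `ℓ ≥ 1` and `b ∈ [0,R̄]`, `β_ℓ(b) ≤ β_{ℓ+1}(b)`.
(Here `β_ℓ = betaAux (ℓ−1)`.) -/
theorem beta_monotone_in_index (T Rbar η : ℝ) (hT : 0 < T) (hRbar : 0 < Rbar) (hη : 0 < η)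
    (fR : ℝ → ℝ) (hfR_nonneg : ∀ r, 0 ≤ fR r)
    (hfR_supp : ∀ r, r < 0 ∨ Rbar < r → fR r = 0)
    (hfR_meas : Measurable fR)
    (hfR_int : ∫ r in (0:ℝ)..Rbar, fR r = 1)
    (Nt : ℕ) (hNt : 2 ≤ Nt) :
    ∀ ℓ : ℕ, 1 ≤ ℓ → ∀ b ∈ Set.Icc (0:ℝ) Rbar,
      betaAux T Rbar η Nt fR (ℓ - 1) b ≤ betaAux T Rbar η Nt fR ℓ b := by
  -- A nonzero integral forces integrability, since the integral of a non-integrable function is `0`.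
  have hint : IntervalIntegrable fR volume 0 Rbar := by
    by_contra h
    rw [intervalIntegral.integral_undef h] at hfR_int
    exact zero_ne_one hfR_int
  intro ℓ hℓ b _
  obtain ⟨m, rfl⟩ := Nat.exists_eq_add_of_le' hℓ
  exact betaAux_le_succ T Rbar η hRbar fR hfR_nonneg hint Nt m b
end

section
/- Let α be defined by: if β_1(0) ≥ 0, α is the unique point of [0,R̄) with α = β_1(α); if β_1(0) < 0, α = 0. Then for every integer ℓ ≥ 1 and every b ∈ [0,R̄] with b ≥ α, one has β_ℓ(b) = β_1(b). -/
/-!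
The function `β_1` is 1-Lipschitz from above: since `max b r ≤ max a r + (b - a)` for `a ≤ b` and
`fR` is a probability density, `β_1 b - β_1 a ≤ b - a` (`betaAux_zero_le_add`). As `β_1 α ≤ α` in
both cases of the definition of `α`, this gives `β_1 b ≤ b` for all `b ≥ α`.

The equality `β_ℓ = β_1` on `[α, R̄]` follows by induction: for `b ≥ α` the point `max b r` is also
in `[α, R̄]`, so the continuation value `β_ℓ (max b r) = β_1 (max b r) ≤ max b r` does not contribute
to the maximum in the recursion, and the integrand reduces to that of `β_1`.
-/

open MeasureTheory Set

/-- `b ↦ β_1 b - b` is nonincreasing. -/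
lemma betaAux_zero_le_add {T Rbar η : ℝ} {Nt : ℕ} {fR : ℝ → ℝ} (hRbar : 0 < Rbar)
    (hfR_nonneg : ∀ r, 0 ≤ fR r) (hfR_int : ∫ r in (0:ℝ)..Rbar, fR r = 1)
    {a b : ℝ} (hab : a ≤ b) :
    betaAux T Rbar η Nt fR 0 b ≤ betaAux T Rbar η Nt fR 0 a + (b - a) := by
  -- A non-integrable density would have integral `0` by convention, not `1`.
  have hf : IntervalIntegrable fR volume 0 Rbar := by
    by_contra h
    rw [intervalIntegral.integral_undef h] at hfR_int
    exact zero_ne_one hfR_int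
  have hmax : ∀ c : ℝ, IntervalIntegrable (fun r => max c r * fR r) volume 0 Rbar := fun c =>
    hf.continuousOn_mul (by fun_prop)
  have hle : ∫ r in (0:ℝ)..Rbar, max b r * fR r ≤
      ∫ r in (0:ℝ)..Rbar, (max a r * fR r + (b - a) * fR r) := by
    refine intervalIntegral.integral_mono_on hRbar.le (hmax b)
      ((hmax a).add (hf.const_mul _)) fun r _ => ?_
    rw [← add_mul]
    refine mul_le_mul_of_nonneg_right (max_le ?_ ?_) (hfR_nonneg r)
    · linarith [le_max_left a r]
    · linarith [le_max_right a r]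
  rw [intervalIntegral.integral_add (hmax a) (hf.const_mul _),
    intervalIntegral.integral_const_mul, hfR_int] at hle
  simp only [betaAux]
  linarith

/-- Above the threshold `α`, all the `β` functions coincide with `β_1`:
for every `ℓ ≥ 1` and `b ∈ [0,R̄]` with `b ≥ α`, `β_ℓ(b) = β_1(b)`.
(Here `β_ℓ = betaAux (ℓ−1)`, and `α` is the unique fixed point of `β_1` in `[0,R̄)`
when `β_1(0) ≥ 0`, and `α = 0` when `β_1(0) < 0`.) -/
theorem beta_eq_beta1_above_threshold (T Rbar η : ℝ) (hT : 0 < T) (hRbar : 0 < Rbar)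
    (hη : 0 < η)
    (fR : ℝ → ℝ) (hfR_nonneg : ∀ r, 0 ≤ fR r)
    (hfR_supp : ∀ r, r < 0 ∨ Rbar < r → fR r = 0)
    (hfR_meas : Measurable fR)
    (hfR_int : ∫ r in (0:ℝ)..Rbar, fR r = 1)
    (Nt : ℕ) (hNt : 2 ≤ Nt)
    (α : ℝ)
    (hα_pos : 0 ≤ betaAux T Rbar η Nt fR 0 0 →
      α ∈ Set.Ico (0:ℝ) Rbar ∧ α = betaAux T Rbar η Nt fR 0 α)
    (hα_neg : betaAux T Rbar η Nt fR 0 0 < 0 → α = 0) :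
    ∀ ℓ : ℕ, 1 ≤ ℓ → ∀ b ∈ Set.Icc (0:ℝ) Rbar, α ≤ b →
      betaAux T Rbar η Nt fR (ℓ - 1) b = betaAux T Rbar η Nt fR 0 b := by
  have hα : betaAux T Rbar η Nt fR 0 α ≤ α := by
    rcases le_or_gt 0 (betaAux T Rbar η Nt fR 0 0) with h | h
    · exact (hα_pos h).2.ge
    · rw [hα_neg h]
      exact h.le
  have hself : ∀ b, α ≤ b → betaAux T Rbar η Nt fR 0 b ≤ b := fun b hb => by
    linarith [betaAux_zero_le_add (T := T) (η := η) (Nt := Nt) hRbar hfR_nonneg hfR_int hb]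
  have key : ∀ m : ℕ, ∀ b ∈ Set.Icc (0:ℝ) Rbar, α ≤ b →
      betaAux T Rbar η Nt fR m b = betaAux T Rbar η Nt fR 0 b := by
    intro m
    induction m with
    | zero => exact fun _ _ _ => rfl
    | succ m ih =>
      intro b hb hαb
      simp only [betaAux]
      congr 1
      refine intervalIntegral.integral_congr fun r hr => ?_
      rw [uIcc_of_le hRbar.le] at hr
      have hαm : α ≤ max b r := hαb.trans (le_max_left b r)
      have hm := ih (max b r) ⟨hb.1.trans (le_max_left b r), max_le hb.2 hr.2⟩ hαm
      rw [hm, ← max_assoc, max_eq_left (hself _ hαm)]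
  exact fun ℓ _ => key (ℓ - 1)
end

section
/- Let α be defined by: if β_1(0) ≥ 0, α is the unique point of [0,R̄) with α = β_1(α); if β_1(0) < 0, α = 0. Then for every integer ℓ ≥ 1 and every b ∈ [0,R̄]: b ≥ β_ℓ(b) if and only if b ≥ α. Equivalently, in the simplified relay-selection model with value functions J̃_k(b) = min{−ηb, −η β_{Ñ−k}(b)} (for stages 1 ≤ k ≤ Ñ−1), it is optimal to stop at state b if and only if b ≥ α; in particular the optimal policy is the same α-threshold rule at every stage. -/
/-!
Write `c = T / (η * Nt) > 0` and `g b = ∫ (r - b)⁺ f(r) dr`, so that `β_1 b - b = g b - c`. As `g` is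
nonincreasing and `g α ≤ c`, `β_1 b ≤ b` holds for `b ≥ α`. For `b < α`, which forces `g α = c`,
the pointwise bound
`(r - b)⁺ ≥ (1 + (α - b) / R̄) (r - α)⁺` on `[0, R̄]` gives `g b ≥ (1 + (α - b) / R̄) c > c`, hence
`β_1 b > b`; this settles the first stage.

The later stages follow by induction. If `b ≥ α` then `max b r ≥ α`, so the inner continuation
value never exceeds `max b r` and `β_{ℓ+1} b = β_1 b ≤ b`. If `b < α` then
`β_{ℓ+1} b ≥ β_1 b > b`. The last comparison of integrals needs integrability, which comes from
each `β_ℓ` being 1-Lipschitz (`betaAux_lipschitz`).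
-/

open MeasureTheory Set

/-- Averaging against a probability density preserves the 1-Lipschitz property in the parameter. -/
lemma average_lipschitz {Rbar : ℝ} (hRbar : 0 < Rbar) {fR : ℝ → ℝ} (h0 : ∀ r, 0 ≤ fR r)
    (hi : IntervalIntegrable fR volume 0 Rbar) (h1 : ∫ r in (0:ℝ)..Rbar, fR r = 1)
    (h : ℝ → ℝ → ℝ) (hc : ∀ b, Continuous (h b))
    (hl : ∀ b b' r, |h b r - h b' r| ≤ |b - b'|) (b b' : ℝ) :
    |(∫ r in (0:ℝ)..Rbar, h b r * fR r) - ∫ r in (0:ℝ)..Rbar, h b' r * fR r| ≤ |b - b'| := by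
  have hI : ∀ b, IntervalIntegrable (fun r => h b r * fR r) volume 0 Rbar :=
    fun b => hi.continuousOn_mul (hc b).continuousOn
  rw [← intervalIntegral.integral_sub (hI b) (hI b')]
  calc |∫ r in (0:ℝ)..Rbar, (h b r * fR r - h b' r * fR r)|
      ≤ ∫ r in (0:ℝ)..Rbar, |h b r * fR r - h b' r * fR r| :=
        intervalIntegral.abs_integral_le_integral_abs hRbar.le
    _ ≤ ∫ r in (0:ℝ)..Rbar, |b - b'| * fR r := by
        refine intervalIntegral.integral_mono_on hRbar.le ((hI b).sub (hI b')).abs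
          (hi.const_mul _) fun r _ => ?_
        rw [← sub_mul, abs_mul, abs_of_nonneg (h0 r)]
        exact mul_le_mul_of_nonneg_right (hl b b' r) (h0 r)
    _ = |b - b'| := by rw [intervalIntegral.integral_const_mul, h1, mul_one]

lemma abs_max_sub_max_le_of_le {a b c d e : ℝ} (h1 : |a - c| ≤ e) (h2 : |b - d| ≤ e) :
    |max a b - max c d| ≤ e :=
  (abs_max_sub_max_le_max a b c d).trans (max_le h1 h2)

lemma betaAux_lipschitz (T η : ℝ) (Nt : ℕ) {Rbar : ℝ} (hRbar : 0 < Rbar) {fR : ℝ → ℝ}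
    (h0 : ∀ r, 0 ≤ fR r) (hi : IntervalIntegrable fR volume 0 Rbar)
    (h1 : ∫ r in (0:ℝ)..Rbar, fR r = 1) (m : ℕ) :
    LipschitzWith 1 (betaAux T Rbar η Nt fR m) := by
  have hmax : ∀ b b' r : ℝ, |max b r - max b' r| ≤ |b - b'| := fun b b' r =>
    abs_max_sub_max_le_of_le le_rfl (by simp)
  induction m with
  | zero =>
    refine LipschitzWith.of_dist_le_mul fun b b' => ?_
    simp only [Real.dist_eq, betaAux, sub_sub_sub_cancel_right, NNReal.coe_one, one_mul]
    exact average_lipschitz hRbar h0 hi h1 (fun b r => max b r) (fun b => by fun_prop) hmax b b'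
  | succ m ih =>
    have hcont := ih.continuous
    refine LipschitzWith.of_dist_le_mul fun b b' => ?_
    simp only [Real.dist_eq, betaAux, sub_sub_sub_cancel_right, NNReal.coe_one, one_mul]
    refine average_lipschitz hRbar h0 hi h1
      (fun b r => max b (max r (betaAux T Rbar η Nt fR m (max b r))))
      (fun b => by fun_prop) (fun b b' r => ?_) b b'
    refine abs_max_sub_max_le_of_le le_rfl (abs_max_sub_max_le_of_le (by simp) ?_)
    have := ih.dist_le_mul (max b r) (max b' r)
    simp only [Real.dist_eq, NNReal.coe_one, one_mul] at this
    exact this.trans (hmax b b' r)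

/-- Optimality of the `α`-threshold rule for the simplified model: at every stage,
stopping at state `b` is optimal (i.e. `b ≥ β_ℓ(b)`) if and only if `b ≥ α`.
(Here `β_ℓ = betaAux (ℓ−1)`, and `α` is the unique fixed point of `β_1` in `[0,R̄)`
when `β_1(0) ≥ 0`, and `α = 0` when `β_1(0) < 0`.) -/
theorem alpha_threshold_optimal (T Rbar η : ℝ) (hT : 0 < T) (hRbar : 0 < Rbar)
    (hη : 0 < η)
    (fR : ℝ → ℝ) (hfR_nonneg : ∀ r, 0 ≤ fR r)
    (hfR_supp : ∀ r, r < 0 ∨ Rbar < r → fR r = 0)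
    (hfR_meas : Measurable fR)
    (hfR_int : ∫ r in (0:ℝ)..Rbar, fR r = 1)
    (Nt : ℕ) (hNt : 2 ≤ Nt)
    (α : ℝ)
    (hα_pos : 0 ≤ betaAux T Rbar η Nt fR 0 0 →
      α ∈ Set.Ico (0:ℝ) Rbar ∧ α = betaAux T Rbar η Nt fR 0 α)
    (hα_neg : betaAux T Rbar η Nt fR 0 0 < 0 → α = 0) :
    ∀ ℓ : ℕ, 1 ≤ ℓ → ∀ b ∈ Set.Icc (0:ℝ) Rbar,
      (betaAux T Rbar η Nt fR (ℓ - 1) b ≤ b ↔ α ≤ b) := by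
  -- a non-integrable `fR` would have integral `0`, not `1`
  have hi : IntervalIntegrable fR volume 0 Rbar :=
    intervalIntegral.intervalIntegrable_of_integral_ne_zero (by rw [hfR_int]; exact one_ne_zero)
  have hI : ∀ h : ℝ → ℝ, Continuous h →
      IntervalIntegrable (fun r => h r * fR r) volume 0 Rbar :=
    fun h hc => hi.continuousOn_mul hc.continuousOn
  have hc : 0 < T / (η * Nt) := by
    have : (0:ℝ) < Nt := by exact_mod_cast (by omega : 0 < Nt)
    positivity
  set c := T / (η * Nt) with hcdef
  set g : ℝ → ℝ := fun b => ∫ r in (0:ℝ)..Rbar, max (r - b) 0 * fR r with hg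
  have hβg : ∀ b, betaAux T Rbar η Nt fR 0 b = b + g b - c := by
    intro b
    have hb : b = ∫ r in (0:ℝ)..Rbar, b * fR r := by
      rw [intervalIntegral.integral_const_mul, hfR_int, mul_one]
    simp only [betaAux, hg]
    rw [← hcdef]
    congr 1
    trans (∫ r in (0:ℝ)..Rbar, b * fR r) + ∫ r in (0:ℝ)..Rbar, max (r - b) 0 * fR r
    swap
    · rw [← hb]
    rw [← intervalIntegral.integral_add (hi.const_mul b) (hI (fun r => max (r - b) 0) (by fun_prop))]
    refine intervalIntegral.integral_congr fun r _ => ?_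
    simp only [← add_mul]
    congr 1
    rw [← max_add_add_left, add_zero, add_sub_cancel, max_comm]
  have hganti : ∀ b b', b ≤ b' → g b' ≤ g b := fun b b' hbb =>
    intervalIntegral.integral_mono_on hRbar.le (hI _ (by fun_prop)) (hI _ (by fun_prop))
      fun r _ => mul_le_mul_of_nonneg_right (max_le_max (by linarith) le_rfl) (hfR_nonneg r)
  have hle : ∀ b, α ≤ b → betaAux T Rbar η Nt fR 0 b ≤ b := by
    intro b hb
    rw [hβg]
    have h2 := hganti α b hb
    rcases lt_or_ge (betaAux T Rbar η Nt fR 0 0) 0 with h | h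
    · rw [hα_neg h] at h2
      rw [hβg] at h
      linarith
    · have := (hα_pos h).2
      rw [hβg] at this
      linarith
  have hlt : ∀ b, 0 ≤ b → b < α → b < betaAux T Rbar η Nt fR 0 b := by
    intro b hb0 hb
    rcases lt_or_ge (betaAux T Rbar η Nt fR 0 0) 0 with h | h
    · rw [hα_neg h] at hb
      linarith
    have hfix := (hα_pos h).2
    rw [hβg] at hfix
    have hgα : g α = c := by linarith
    have hδ : 0 < (α - b) / Rbar := div_pos (by linarith) hRbar
    have key : (1 + (α - b) / Rbar) * g α ≤ g b := by
      simp only [hg]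
      rw [← intervalIntegral.integral_const_mul]
      refine intervalIntegral.integral_mono_on hRbar.le
        ((hI _ (by fun_prop)).const_mul _) (hI _ (by fun_prop)) fun r hr => ?_
      rw [← mul_assoc]
      refine mul_le_mul_of_nonneg_right ?_ (hfR_nonneg r)
      rcases le_total r α with hrα | hrα
      · rw [max_eq_right (by linarith : r - α ≤ 0), mul_zero]
        exact le_max_right _ _
      · rw [max_eq_left (by linarith : 0 ≤ r - α)]
        refine le_trans ?_ (le_max_left _ _)
        have h3 : (α - b) / Rbar * (r - α) ≤ (α - b) / Rbar * Rbar :=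
          mul_le_mul_of_nonneg_left (by linarith [hr.2]) hδ.le
        rw [div_mul_cancel₀ _ hRbar.ne'] at h3
        linarith
    rw [hgα] at key
    rw [hβg]
    nlinarith [mul_pos hδ hc]
  have main : ∀ m, ∀ b ∈ Set.Icc (0:ℝ) Rbar, (betaAux T Rbar η Nt fR m b ≤ b ↔ α ≤ b) := by
    intro m
    induction m with
    | zero =>
      exact fun b hb => ⟨fun h => not_lt.1 fun h' => (hlt b hb.1 h').not_ge h, hle b⟩
    | succ m ih =>
      intro b hb
      constructor
      · intro h
        by_contra! h'
        have hcont := (betaAux_lipschitz T η Nt hRbar hfR_nonneg hi hfR_int m).continuous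
        have hmono : betaAux T Rbar η Nt fR 0 b ≤ betaAux T Rbar η Nt fR (m + 1) b := by
          simp only [betaAux]
          refine sub_le_sub_right (intervalIntegral.integral_mono_on hRbar.le
            (hI _ (by fun_prop)) (hI _ (by fun_prop)) fun r _ => ?_) _
          exact mul_le_mul_of_nonneg_right (max_le_max le_rfl (le_max_left _ _)) (hfR_nonneg r)
        linarith [hlt b hb.1 h']
      · intro h
        have heq : betaAux T Rbar η Nt fR (m + 1) b = betaAux T Rbar η Nt fR 0 b := by
          simp only [betaAux]
          congr 1
          refine intervalIntegral.integral_congr fun r hr => ?_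
          rw [uIcc_of_le hRbar.le] at hr
          have h4 := (ih (max b r) ⟨hb.1.trans (le_max_left _ _), max_le hb.2 hr.2⟩).2
            (h.trans (le_max_left _ _))
          simp only [← max_assoc]
          rw [max_eq_left h4]
        rw [heq]
        exact hle b h
  exact fun ℓ _ b hb => main (ℓ - 1) b hb
end
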